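/- arXiv:2006.15879 — 8 statements merged into one kernel-verified Lean document; each statement's English description precedes it below -/
import Mathlib

section
/- Let λ ≥ 1, let K be a coagulation kernel satisfying the growth condition with exponent λ and constants 0 < k₁ < k₂, and let S ∈ X₀⁺. If φ is a stationary solution to the coagulation equation with source S, then φ = 0 a.e. and S = 0 a.e. on (0,∞). -/
/-!
Test the equation with the truncations `ϑ_n(x) = min(x, n)` (written `min |x| n` below, to be
bounded on the whole line). The quantity
`ϑ_n(x) + ϑ_n(y) - ϑ_n(x+y)` lies between `0` and `min(x, y)` and vanishes once `n ≥ x + y`.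
Since `φ` has finite moments of order `0` and `λ ≥ 1`, it has a finite first moment, so
`min(x, y) K(x,y) φ(x) φ(y) ≤ k₂ (y x^λ + x y^λ) φ(x) φ(y)` is integrable on the quadrant, and by
dominated convergence the coagulation term tends to `0`: no mass is lost at infinity. Hence
`∫ S(x) min(x, n) dx → 0`; this sequence is nondecreasing in `n`, so `S = 0` a.e. Testing with
`ϑ = 1` then gives `∬ K φ φ = 0`, and `K > 0` forces `φ = 0` a.e.
-/


open MeasureTheory Set Filter

noncomputable section

/-- `h` belongs to `X_m = L¹((0,∞), x^m dx)`. -/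
def memX (m : ℝ) (h : ℝ → ℝ) : Prop :=
  MeasureTheory.IntegrableOn (fun x => x ^ m * h x) (Set.Ioi 0)

/-- The moment `M_m(h) = ∫₀^∞ x^m h(x) dx`. -/
def Mom (m : ℝ) (h : ℝ → ℝ) : ℝ := ∫ x in Set.Ioi (0:ℝ), x ^ m * h x

/-- A coagulation kernel: measurable, nonnegative, symmetric. -/
def IsKernel (K : ℝ → ℝ → ℝ) : Prop :=
  Measurable (fun p : ℝ × ℝ => K p.1 p.2) ∧ (∀ x y, 0 ≤ K x y) ∧ ∀ x y, K x y = K y x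

/-- The growth condition `k₁(x^λ + y^λ) ≤ K(x,y) ≤ k₂(x^λ + y^λ)`. -/
def GrowthCond (lam k1 k2 : ℝ) (K : ℝ → ℝ → ℝ) : Prop :=
  ∀ x y : ℝ, 0 < x → 0 < y →
    k1 * (x ^ lam + y ^ lam) ≤ K x y ∧ K x y ≤ k2 * (x ^ lam + y ^ lam)

/-- `S ∈ X₀⁺`: measurable, a.e. nonnegative on `(0,∞)` and integrable there. -/
def SourceX0 (S : ℝ → ℝ) : Prop :=
  Measurable S ∧ (∀ᵐ x ∂(volume.restrict (Set.Ioi (0:ℝ))), 0 ≤ S x) ∧ memX 0 S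

/-- A stationary solution to the coagulation equation with source `S`. -/
def IsStationarySol (lam : ℝ) (K : ℝ → ℝ → ℝ) (S φ : ℝ → ℝ) : Prop :=
  Measurable φ ∧ (∀ᵐ x ∂(volume.restrict (Set.Ioi (0:ℝ))), 0 ≤ φ x) ∧
  memX 0 φ ∧ memX lam φ ∧
  ∀ ϑ : ℝ → ℝ, Measurable ϑ → (∃ C : ℝ, ∀ x, |ϑ x| ≤ C) →
    (1 / 2) * (∫ x in Set.Ioi (0:ℝ), ∫ y in Set.Ioi (0:ℝ),
        (ϑ (x + y) - ϑ x - ϑ y) * K x y * φ x * φ y)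
      + ∫ x in Set.Ioi (0:ℝ), S x * ϑ x = 0

/-- `X₀ ∩ X_λ ⊆ X₁` when `λ ≥ 1`, by `x ≤ 1 + x ^ λ`. -/
lemma integrable_first_moment {lam : ℝ} (hlam : 1 ≤ lam) {φ : ℝ → ℝ} (hm : Measurable φ)
    (h0 : Integrable φ (volume.restrict (Ioi (0:ℝ))))
    (hl : Integrable (fun x => x ^ lam * φ x) (volume.restrict (Ioi (0:ℝ)))) :
    Integrable (fun x => x * φ x) (volume.restrict (Ioi (0:ℝ))) := by
  refine (h0.norm.add hl.norm).mono' (by fun_prop) ?_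
  filter_upwards [ae_restrict_mem measurableSet_Ioi] with x hx
  have hx : 0 < x := hx
  have hp : 0 < x ^ lam := Real.rpow_pos_of_pos hx _
  have hle : x ≤ 1 + x ^ lam := by
    rcases le_total x 1 with h | h
    · linarith
    · have := Real.rpow_le_rpow_of_exponent_le h hlam
      rw [Real.rpow_one] at this
      linarith
  simp only [Pi.add_apply, Real.norm_eq_abs, abs_mul, abs_of_pos hx, abs_of_pos hp]
  nlinarith [mul_le_mul_of_nonneg_right hle (abs_nonneg (φ x))]

/-- The defect of additivity of the truncation `x ↦ min |x| n` on the positive half-line. -/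
lemma abs_trunc_defect_le {x y n : ℝ} (hx : 0 < x) (hy : 0 < y) (hn : 0 ≤ n) :
    |min |x + y| n - min |x| n - min |y| n| ≤ min x y := by
  rw [abs_of_pos hx, abs_of_pos hy, abs_of_pos (add_pos hx hy)]
  grind

/-- If the integrand of the coagulation term is integrable on the quadrant, then the weak
formulation can be written with an integral over the product measure. -/
lemma weak_form_prod {lam : ℝ} {K : ℝ → ℝ → ℝ} {S φ : ℝ → ℝ} (hφ : IsStationarySol lam K S φ)
    {ϑ : ℝ → ℝ} (hϑ : Measurable ϑ) (hb : ∃ C : ℝ, ∀ x, |ϑ x| ≤ C)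
    (hi : Integrable (fun p : ℝ × ℝ =>
      (ϑ (p.1 + p.2) - ϑ p.1 - ϑ p.2) * K p.1 p.2 * φ p.1 * φ p.2)
      ((volume.restrict (Ioi (0:ℝ))).prod (volume.restrict (Ioi (0:ℝ))))) :
    (1 / 2) * (∫ p : ℝ × ℝ, (ϑ (p.1 + p.2) - ϑ p.1 - ϑ p.2) * K p.1 p.2 * φ p.1 * φ p.2
      ∂((volume.restrict (Ioi (0:ℝ))).prod (volume.restrict (Ioi (0:ℝ)))))
      + ∫ x in Ioi (0:ℝ), S x * ϑ x = 0 := by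
  rw [integral_prod _ hi]
  exact hφ.2.2.2.2 ϑ hϑ hb

theorem stmt1 (lam k1 k2 : ℝ) (hlam : 1 ≤ lam)
    (hk1 : 0 < k1) (hk12 : k1 < k2)
    (K : ℝ → ℝ → ℝ) (hK : IsKernel K) (hG : GrowthCond lam k1 k2 K)
    (S : ℝ → ℝ) (hS : SourceX0 S)
    (φ : ℝ → ℝ) (hφ : IsStationarySol lam K S φ) :
    φ =ᵐ[volume.restrict (Set.Ioi (0:ℝ))] 0 ∧
    S =ᵐ[volume.restrict (Set.Ioi (0:ℝ))] 0 := by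
  have hweak := @weak_form_prod lam K S φ hφ
  obtain ⟨hφm, hφ0, hi0, hil, -⟩ := hφ
  obtain ⟨hSm, hS0, hSi⟩ := hS
  obtain ⟨hKm, hK0, -⟩ := hK
  simp only [memX, Real.rpow_zero, one_mul, IntegrableOn] at hi0 hil hSi
  have hi1 := integrable_first_moment hlam hφm hi0 hil
  set μ : Measure ℝ := volume.restrict (Ioi (0:ℝ)) with hμ
  have hpos : ∀ᵐ x ∂μ, 0 < x := ae_restrict_mem measurableSet_Ioi
  have hpos1 : ∀ᵐ p ∂(μ.prod μ), 0 < p.1 ∧ 0 ≤ φ p.1 :=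
    Measure.quasiMeasurePreserving_fst.ae (hpos.and hφ0)
  have hpos2 : ∀ᵐ p ∂(μ.prod μ), 0 < p.2 ∧ 0 ≤ φ p.2 :=
    Measure.quasiMeasurePreserving_snd.ae (hpos.and hφ0)
  have hmeas : ∀ ϑ : ℝ → ℝ, Measurable ϑ → AEStronglyMeasurable (fun p : ℝ × ℝ =>
      (ϑ (p.1 + p.2) - ϑ p.1 - ϑ p.2) * K p.1 p.2 * φ p.1 * φ p.2) (μ.prod μ) := by
    intro ϑ hϑ
    refine Measurable.aestronglyMeasurable ?_
    exact ((((by fun_prop : Measurable fun p : ℝ × ℝ => ϑ (p.1 + p.2) - ϑ p.1 - ϑ p.2).mul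
      hKm).mul (by fun_prop)).mul (by fun_prop))
  -- the source vanishes
  have hSzero : S =ᵐ[μ] 0 := by
    set G : ℝ × ℝ → ℝ := fun p => k2 * ((p.1 ^ lam * φ p.1) * (p.2 * φ p.2)
      + (p.1 * φ p.1) * (p.2 ^ lam * φ p.2)) with hGdef
    have hGi : Integrable G (μ.prod μ) :=
      ((hil.mul_prod hi1).add (hi1.mul_prod hil)).const_mul k2
    set ϑ : ℕ → ℝ → ℝ := fun n x => min |x| (n:ℝ) with hϑ
    have hϑm : ∀ n, Measurable (ϑ n) := fun n => by fun_prop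
    have hϑb : ∀ n x, |ϑ n x| ≤ n := by
      intro n x
      rw [abs_of_nonneg (le_min (abs_nonneg x) n.cast_nonneg)]
      exact min_le_right _ _
    set F : ℕ → ℝ × ℝ → ℝ := fun n p =>
      (ϑ n (p.1 + p.2) - ϑ n p.1 - ϑ n p.2) * K p.1 p.2 * φ p.1 * φ p.2 with hF
    have hFG : ∀ n, ∀ᵐ p ∂(μ.prod μ), ‖F n p‖ ≤ G p := by
      intro n
      filter_upwards [hpos1, hpos2] with p h1 h2
      obtain ⟨x, y⟩ := p
      obtain ⟨hx, hfx⟩ := h1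
      obtain ⟨hy, hfy⟩ := h2
      simp only at hx hy hfx hfy
      have hd := abs_trunc_defect_le hx hy n.cast_nonneg
      have hxl : 0 < x ^ lam := Real.rpow_pos_of_pos hx _
      have hyl : 0 < y ^ lam := Real.rpow_pos_of_pos hy _
      have hm0 : 0 < min x y := lt_min hx hy
      have hk2 : 0 < k2 := hk1.trans hk12
      simp only [hF, hGdef, Real.norm_eq_abs, abs_mul, abs_of_nonneg hfx, abs_of_nonneg hfy,
        abs_of_nonneg (hK0 x y)]
      calc |ϑ n (x + y) - ϑ n x - ϑ n y| * K x y * φ x * φ y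
          ≤ min x y * (k2 * (x ^ lam + y ^ lam)) * φ x * φ y := by
            gcongr
            · exact hK0 x y
            · exact (hG x y hx hy).2
        _ = k2 * (min x y * x ^ lam + min x y * y ^ lam) * φ x * φ y := by ring
        _ ≤ k2 * (y * x ^ lam + x * y ^ lam) * φ x * φ y := by
            gcongr
            · exact min_le_right _ _
            · exact min_le_left _ _
        _ = _ := by ring
    have hFi : ∀ n, Integrable (F n) (μ.prod μ) := fun n =>
      hGi.mono' (hmeas _ (hϑm n)) (hFG n)
    have hlim : Tendsto (fun n => ∫ p, F n p ∂(μ.prod μ)) atTop (nhds (∫ _, (0:ℝ) ∂(μ.prod μ))) := by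
      refine tendsto_integral_of_dominated_convergence G (fun n => hmeas _ (hϑm n)) hGi hFG ?_
      filter_upwards [hpos1, hpos2] with p h1 h2
      refine tendsto_const_nhds.congr' ?_
      filter_upwards [eventually_ge_atTop ⌈p.1 + p.2⌉₊] with n hn
      have hn' : p.1 + p.2 ≤ n := Nat.ceil_le.mp hn
      have e : ϑ n (p.1 + p.2) - ϑ n p.1 - ϑ n p.2 = 0 := by
        simp only [hϑ, abs_of_pos h1.1, abs_of_pos h2.1, abs_of_pos (add_pos h1.1 h2.1)]
        rw [min_eq_left hn', min_eq_left (by linarith [h2.1]), min_eq_left (by linarith [h1.1])]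
        ring
      simp [hF, e]
    have hSϑi : ∀ n, Integrable (fun x => S x * ϑ n x) μ := fun n =>
      hSi.mul_bdd (c := n) (hϑm n).aestronglyMeasurable (Eventually.of_forall (hϑb n))
    have hle : ∫ x, S x * ϑ 1 x ∂μ ≤ 0 := by
      have hlim' : Tendsto (fun n => -((1 / 2) * ∫ p, F n p ∂(μ.prod μ))) atTop (nhds 0) := by
        simpa using (hlim.const_mul (1 / 2 : ℝ)).neg
      refine ge_of_tendsto hlim' ?_
      filter_upwards [eventually_ge_atTop 1] with n hn
      have hw := hweak (hϑm n) ⟨n, hϑb n⟩ (hFi n)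
      have hmono : ∫ x, S x * ϑ 1 x ∂μ ≤ ∫ x, S x * ϑ n x ∂μ := by
        refine integral_mono_ae (hSϑi 1) (hSϑi n) ?_
        filter_upwards [hS0] with x hx
        exact mul_le_mul_of_nonneg_left (min_le_min_left _ (by exact_mod_cast hn)) hx
      change (1 / 2) * (∫ p, F n p ∂(μ.prod μ)) + ∫ x, S x * ϑ n x ∂μ = 0 at hw
      linarith
    have hnn : 0 ≤ᵐ[μ] fun x => S x * ϑ 1 x := by
      filter_upwards [hS0] with x hx
      exact mul_nonneg hx (le_min (abs_nonneg x) (Nat.cast_nonneg 1))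
    have hz := (integral_eq_zero_iff_of_nonneg_ae hnn (hSϑi 1)).1
      (le_antisymm hle (integral_nonneg_of_ae hnn))
    filter_upwards [hz, hpos] with x hx hx0
    have h1 : 0 < ϑ 1 x := lt_min (abs_pos.2 hx0.ne') (by norm_num)
    exact (mul_eq_zero.1 hx).resolve_right h1.ne'
  refine ⟨?_, hSzero⟩
  -- for `ϑ = 1` the coagulation integrand is `-K φ φ`
  have hHi : Integrable (fun p : ℝ × ℝ => ((fun _ : ℝ => (1:ℝ)) (p.1 + p.2)
      - (fun _ : ℝ => (1:ℝ)) p.1 - (fun _ : ℝ => (1:ℝ)) p.2) * K p.1 p.2 * φ p.1 * φ p.2)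
      (μ.prod μ) := by
    refine (((hil.mul_prod hi0).add (hi0.mul_prod hil)).const_mul k2).mono'
      (hmeas (fun _ => 1) measurable_const) ?_
    filter_upwards [hpos1, hpos2] with p h1 h2
    have hb := (hG p.1 p.2 h1.1 h2.1).2
    have hff := mul_nonneg h1.2 h2.2
    simp only [Pi.add_apply, Real.norm_eq_abs, abs_mul, abs_of_nonneg h1.2, abs_of_nonneg h2.2,
      abs_of_nonneg (hK0 p.1 p.2)]
    norm_num
    nlinarith [mul_le_mul_of_nonneg_right hb hff]
  have hw := hweak (ϑ := fun _ => 1) measurable_const ⟨1, fun _ => by simp⟩ hHi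
  have hS1 : ∫ x, S x * 1 ∂μ = 0 := by
    rw [integral_congr_ae (g := fun _ => (0:ℝ)) (by
      filter_upwards [hSzero] with x hx
      simp [hx])]
    simp
  rw [hS1, add_zero] at hw
  have hnn : 0 ≤ᵐ[μ.prod μ] fun p : ℝ × ℝ => K p.1 p.2 * φ p.1 * φ p.2 := by
    filter_upwards [hpos1, hpos2] with p h1 h2
    exact mul_nonneg (mul_nonneg (hK0 _ _) h1.2) h2.2
  have hKi : Integrable (fun p : ℝ × ℝ => K p.1 p.2 * φ p.1 * φ p.2) (μ.prod μ) :=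
    hHi.neg.congr (Eventually.of_forall fun p => by simp)
  have hKint : ∫ p : ℝ × ℝ, K p.1 p.2 * φ p.1 * φ p.2 ∂(μ.prod μ) = 0 := by
    have e : ∀ p : ℝ × ℝ, ((1:ℝ) - 1 - 1) * K p.1 p.2 * φ p.1 * φ p.2
        = -(K p.1 p.2 * φ p.1 * φ p.2) := fun p => by ring
    simp only [e, integral_neg] at hw
    linarith
  have hKz := (integral_eq_zero_iff_of_nonneg_ae hnn hKi).1 hKint
  have hφφ : ∫ p : ℝ × ℝ, φ p.1 * φ p.2 ∂(μ.prod μ) = 0 := by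
    rw [integral_congr_ae (g := fun _ => (0:ℝ)) ?_]
    · simp
    filter_upwards [hKz, hpos1, hpos2] with p hp h1 h2
    have hKp : 0 < K p.1 p.2 := lt_of_lt_of_le (mul_pos hk1 (add_pos
      (Real.rpow_pos_of_pos h1.1 _) (Real.rpow_pos_of_pos h2.1 _))) (hG p.1 p.2 h1.1 h2.1).1
    have hp' : K p.1 p.2 * (φ p.1 * φ p.2) = 0 := by rw [← mul_assoc]; exact hp
    exact (mul_eq_zero.1 hp').resolve_left hKp.ne'
  rw [integral_prod_mul] at hφφ
  exact (integral_eq_zero_iff_of_nonneg_ae hφ0 hi0).1 (mul_self_eq_zero.1 hφφ)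
end
end

section
/- Let λ ∈ [0,1), let K be a coagulation kernel satisfying the growth condition with exponent λ and constants 0 < k₁ < k₂, let S ∈ X₀⁺, and let φ be a stationary solution to the coagulation equation with source S. If S is not a.e. zero, then ∫₀^∞ x^{(1+λ)/2} φ(x) dx = ∞, i.e. φ ∉ X_{(1+λ)/2}. -/
/-!
The truncated mass `ϑ_A(x) = min(x, A)` is subadditive, and its defect
`ϑ_A(x+y) - ϑ_A(x) - ϑ_A(y)` vanishes once `A ≥ x + y` and is at most `min(x, y)` in absolute value.
With `m = (1+λ)/2`, the growth condition yields
`min(x, y) K(x, y) ≤ 2 k₂ min(x, y) max(x, y)^λ ≤ 2 k₂ (x y)^m` (`min_mul_kernel_le`).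
If the moment of order `m` of `φ` were finite, `2 k₂ x^m φ(x) y^m φ(y)` would be an integrable
majorant, so by dominated convergence the coagulation term tested against `ϑ_A` would tend to `0`
as `A → ∞` (no mass flux to infinity, `tendsto_flux`). Stationarity then gives `∫ S ϑ_A → 0`. Since
`∫ S ϑ_A` increases with `A`, it follows that `∫ S ϑ_1 = 0`, hence `S = 0` almost everywhere.
-/

open MeasureTheory Set Filter

noncomputable section

/-- The truncated mass `min(x, n)`, extended by `0` to negative `x` so that it is bounded on the
whole line. -/
def truncMass (n : ℕ) (x : ℝ) : ℝ := min (max x 0) n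

lemma truncMass_nonneg (n : ℕ) (x : ℝ) : 0 ≤ truncMass n x :=
  le_min (le_max_right _ _) n.cast_nonneg

lemma truncMass_le (n : ℕ) (x : ℝ) : truncMass n x ≤ n := min_le_right _ _

lemma abs_truncMass_le (n : ℕ) (x : ℝ) : |truncMass n x| ≤ n := by
  rw [abs_of_nonneg (truncMass_nonneg n x)]; exact truncMass_le n x

lemma measurable_truncMass (n : ℕ) : Measurable (truncMass n) := by
  unfold truncMass; fun_prop

lemma abs_defect_le (n : ℕ) {x y : ℝ} (hx : 0 < x) (hy : 0 < y) :
    |truncMass n (x + y) - truncMass n x - truncMass n y| ≤ min x y := by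
  have hn : (0 : ℝ) ≤ n := n.cast_nonneg
  unfold truncMass
  rw [max_eq_left hx.le, max_eq_left hy.le, max_eq_left (add_pos hx hy).le, abs_le]
  rcases min_cases (x + y) (n : ℝ) with h1 | h1 <;> rcases min_cases x (n : ℝ) with h2 | h2 <;>
    rcases min_cases y (n : ℝ) with h3 | h3 <;> rcases min_cases x y with h4 | h4 <;>
    constructor <;> linarith

lemma defect_eq_zero {n : ℕ} {x y : ℝ} (hx : 0 < x) (hy : 0 < y) (h : x + y ≤ n) :
    truncMass n (x + y) - truncMass n x - truncMass n y = 0 := by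
  unfold truncMass
  rw [max_eq_left hx.le, max_eq_left hy.le, max_eq_left (add_pos hx hy).le, min_eq_left h,
    min_eq_left (by linarith), min_eq_left (by linarith)]
  ring

lemma mul_rpow_add_le {lam x y : ℝ} (h0 : 0 ≤ lam) (h1 : lam < 1) (hx : 0 < x) (hxy : x ≤ y) :
    x * (x ^ lam + y ^ lam) ≤ 2 * (x ^ ((1 + lam) / 2) * y ^ ((1 + lam) / 2)) := by
  have hy : 0 < y := hx.trans_le hxy
  have hl : x ^ lam ≤ y ^ lam := Real.rpow_le_rpow hx.le hxy h0
  have hs : x ^ ((1 - lam) / 2) ≤ y ^ ((1 - lam) / 2) :=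
    Real.rpow_le_rpow hx.le hxy (by linarith)
  have ex : x = x ^ ((1 + lam) / 2) * x ^ ((1 - lam) / 2) := by
    rw [← Real.rpow_add hx, show (1 + lam) / 2 + (1 - lam) / 2 = (1 : ℝ) by ring, Real.rpow_one]
  have ey : y ^ ((1 + lam) / 2) = y ^ ((1 - lam) / 2) * y ^ lam := by
    rw [← Real.rpow_add hy]; congr 1; ring
  have key : x * y ^ lam ≤ x ^ ((1 + lam) / 2) * y ^ ((1 + lam) / 2) := by
    calc x * y ^ lam = x ^ ((1 + lam) / 2) * (x ^ ((1 - lam) / 2) * y ^ lam) := by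
          rw [← mul_assoc, ← ex]
      _ ≤ x ^ ((1 + lam) / 2) * (y ^ ((1 - lam) / 2) * y ^ lam) := by gcongr
      _ = _ := by rw [← ey]
  nlinarith [mul_le_mul_of_nonneg_left hl hx.le]

/-- The exponent `(1 + λ) / 2` splits `min(x, y) max(x, y)^λ` evenly between `x` and `y`. -/
lemma min_mul_kernel_le {lam k1 k2 : ℝ} {K : ℝ → ℝ → ℝ} (h0 : 0 ≤ lam) (h1 : lam < 1)
    (hk2 : 0 < k2) (hG : GrowthCond lam k1 k2 K) {x y : ℝ} (hx : 0 < x) (hy : 0 < y) :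
    min x y * K x y ≤ 2 * k2 * (x ^ ((1 + lam) / 2) * y ^ ((1 + lam) / 2)) := by
  have hp : min x y * (x ^ lam + y ^ lam) ≤
      2 * (x ^ ((1 + lam) / 2) * y ^ ((1 + lam) / 2)) := by
    rcases le_total x y with h | h
    · rw [min_eq_left h]; exact mul_rpow_add_le h0 h1 hx h
    · rw [min_eq_right h, add_comm, mul_comm (x ^ ((1 + lam) / 2))]
      exact mul_rpow_add_le h0 h1 hy h
  calc min x y * K x y ≤ min x y * (k2 * (x ^ lam + y ^ lam)) :=
        mul_le_mul_of_nonneg_left (hG x y hx hy).2 (lt_min hx hy).le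
    _ = k2 * (min x y * (x ^ lam + y ^ lam)) := by ring
    _ ≤ k2 * (2 * (x ^ ((1 + lam) / 2) * y ^ ((1 + lam) / 2))) := by gcongr
    _ = _ := by ring

/-- If the moment of order `(1 + λ) / 2` is finite, no mass escapes to infinity. -/
lemma tendsto_flux {lam k1 k2 : ℝ} (h0 : 0 ≤ lam) (h1 : lam < 1) (hk2 : 0 < k2)
    {K : ℝ → ℝ → ℝ} (hK : IsKernel K) (hG : GrowthCond lam k1 k2 K)
    {φ : ℝ → ℝ} (hφ : Measurable φ) (hm : memX ((1 + lam) / 2) φ) :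
    Tendsto (fun n : ℕ => ∫ x in Set.Ioi (0:ℝ), ∫ y in Set.Ioi (0:ℝ),
      (truncMass n (x + y) - truncMass n x - truncMass n y) * K x y * φ x * φ y)
      atTop (nhds 0) := by
  set μ := (volume : Measure ℝ).restrict (Set.Ioi 0) with hμ
  let F : ℕ → ℝ × ℝ → ℝ := fun n p =>
    (truncMass n (p.1 + p.2) - truncMass n p.1 - truncMass n p.2) * K p.1 p.2 * φ p.1 * φ p.2
  let w : ℝ → ℝ := fun x => ‖x ^ ((1 + lam) / 2) * φ x‖
  let G : ℝ × ℝ → ℝ := fun p => 2 * k2 * (w p.1 * w p.2)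
  have hw : Integrable w μ := Integrable.norm hm
  have hGi : Integrable G (μ.prod μ) := (hw.mul_prod hw).const_mul _
  have hFm : ∀ n, AEStronglyMeasurable (F n) (μ.prod μ) := fun n => by
    have hT := measurable_truncMass n
    have hK1 := hK.1
    refine Measurable.aestronglyMeasurable ?_
    exact ((((hT.comp (measurable_fst.add measurable_snd)).sub (hT.comp measurable_fst)).sub
      (hT.comp measurable_snd)).mul hK1 |>.mul (hφ.comp measurable_fst)).mul
      (hφ.comp measurable_snd)
  have hpos : ∀ᵐ p ∂(μ.prod μ), 0 < p.1 ∧ 0 < p.2 := by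
    rw [hμ, Measure.prod_restrict]
    filter_upwards [ae_restrict_mem (measurableSet_Ioi.prod measurableSet_Ioi)] with p hp
    exact hp
  have hbd : ∀ n, ∀ᵐ p ∂(μ.prod μ), ‖F n p‖ ≤ G p := fun n => by
    filter_upwards [hpos] with p hp
    obtain ⟨hx, hy⟩ := hp
    have hK0 := hK.2.1 p.1 p.2
    have hx' := Real.rpow_nonneg hx.le ((1 + lam) / 2)
    have hy' := Real.rpow_nonneg hy.le ((1 + lam) / 2)
    simp only [F, G, w, norm_mul, Real.norm_eq_abs, abs_of_nonneg hK0, abs_of_nonneg hx',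
      abs_of_nonneg hy']
    calc _ ≤ min p.1 p.2 * K p.1 p.2 * |φ p.1| * |φ p.2| := by
          gcongr; exact abs_defect_le n hx hy
      _ ≤ 2 * k2 * (p.1 ^ ((1 + lam) / 2) * p.2 ^ ((1 + lam) / 2)) * |φ p.1| * |φ p.2| := by
          refine mul_le_mul_of_nonneg_right (mul_le_mul_of_nonneg_right ?_ (abs_nonneg _))
            (abs_nonneg _)
          exact min_mul_kernel_le h0 h1 hk2 hG hx hy
      _ = _ := by ring
  have hlim : ∀ᵐ p ∂(μ.prod μ), Tendsto (fun n => F n p) atTop (nhds 0) := by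
    filter_upwards [hpos] with p hp
    refine tendsto_const_nhds.congr' ?_
    filter_upwards [eventually_ge_atTop ⌈p.1 + p.2⌉₊] with n hn
    simp only [F]
    rw [defect_eq_zero hp.1 hp.2 (Nat.ceil_le.mp hn)]
    ring
  have key := tendsto_integral_of_dominated_convergence G hFm hGi hbd hlim
  rw [integral_zero] at key
  refine key.congr fun n => ?_
  exact integral_prod (F n) (hGi.mono' (hFm n) (hbd n))

theorem stmt2 (lam k1 k2 : ℝ) (hlam0 : 0 ≤ lam) (hlam1 : lam < 1)
    (hk1 : 0 < k1) (hk12 : k1 < k2)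
    (K : ℝ → ℝ → ℝ) (hK : IsKernel K) (hG : GrowthCond lam k1 k2 K)
    (S : ℝ → ℝ) (hS : SourceX0 S)
    (φ : ℝ → ℝ) (hφ : IsStationarySol lam K S φ)
    (hSne : ¬ S =ᵐ[volume.restrict (Set.Ioi (0:ℝ))] 0) :
    ¬ memX ((1 + lam) / 2) φ := by
  intro hm
  obtain ⟨hφm, -, -, -, hstat⟩ := hφ
  obtain ⟨hSm, hS0, hSi⟩ := hS
  have hflux := tendsto_flux hlam0 hlam1 (hk1.trans hk12) hK hG hφm hm
  set μ := (volume : Measure ℝ).restrict (Set.Ioi 0) with hμ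
  have hSint : Integrable S μ := by
    simpa only [memX, IntegrableOn, Real.rpow_zero, one_mul] using hSi
  have hST : ∀ n : ℕ, Integrable (fun x => S x * truncMass n x) μ := fun n =>
    hSint.mul_bdd (measurable_truncMass n).aestronglyMeasurable
      (Eventually.of_forall (abs_truncMass_le n))
  have hlim : Tendsto (fun n : ℕ => ∫ x, S x * truncMass n x ∂μ) atTop (nhds 0) := by
    have h := hflux.const_mul (-(1 / 2))
    rw [mul_zero] at h
    refine h.congr fun n => ?_
    have := hstat (truncMass n) (measurable_truncMass n) ⟨n, abs_truncMass_le n⟩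
    linarith
  have hnn : 0 ≤ᵐ[μ] fun x => S x * truncMass 1 x := by
    filter_upwards [hS0] with x hx using mul_nonneg hx (truncMass_nonneg 1 x)
  have hle : ∫ x, S x * truncMass 1 x ∂μ ≤ 0 := by
    refine ge_of_tendsto hlim ?_
    filter_upwards [eventually_ge_atTop 1] with n hn
    refine integral_mono_ae (hST 1) (hST n) ?_
    filter_upwards [hS0] with x hx
    exact mul_le_mul_of_nonneg_left (min_le_min_left _ (by exact_mod_cast hn)) hx
  have hzero := (integral_eq_zero_iff_of_nonneg_ae hnn (hST 1)).mp
    (le_antisymm hle (integral_nonneg_of_ae hnn))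
  refine hSne ?_
  filter_upwards [hzero, ae_restrict_mem measurableSet_Ioi] with x hx hx0
  have hT : 0 < truncMass 1 x := lt_min (lt_max_of_lt_left hx0) (by norm_num)
  exact (mul_eq_zero.mp hx).resolve_right hT.ne'
end
end

section
/- Let λ ≥ 0, let K be a coagulation kernel satisfying the growth condition with exponent λ and constants 0 < k₁ < k₂, let S ∈ X₀⁺, and let φ be a stationary solution to the coagulation equation with source S. If w : (0,∞) → [0,∞) is continuous and non-increasing and ∫₀^∞ w(x) S(x) dx < ∞, then ∫₀^∞ w(x) φ(x) dx < ∞. In particular, if S ∈ X_m for some m < 0, then φ ∈ X_m. -/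
/-!
Since `w` is non-increasing, the truncations `ϑ = min(w, n)` are bounded, non-increasing test
functions, for which `ϑ(x+y) - ϑ(x) - ϑ(y) ≤ -ϑ(x)`. Combined with `K(x,y) ≥ k₁ y^λ`, the
stationary equation gives `(k₁/2) M_λ(φ) ∫ ϑ φ ≤ ∫ S ϑ ≤ ∫ S w`, a bound uniform in `n`
(`truncated_bound`). If `M_λ(φ) > 0`, letting `n → ∞` bounds `∫ w φ`; if `M_λ(φ) = 0`, then
`φ = 0` almost everywhere and there is nothing to prove. The statement on `X_m` is the case
`w(x) = x^m`.
-/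


open MeasureTheory Set Filter

noncomputable section

/-- The truncated weight `min(w, n)` on `(0,∞)`, extended by zero to a function on `ℝ`. -/
def truncW (w : ℝ → ℝ) (n : ℕ) : ℝ → ℝ :=
  (Set.Ioi (0:ℝ)).indicator (fun x => min (w x) n)

lemma truncW_of_pos (w : ℝ → ℝ) (n : ℕ) {x : ℝ} (hx : 0 < x) :
    truncW w n x = min (w x) n := by
  simp [truncW, hx]

lemma measurable_truncW {w : ℝ → ℝ} (hw : ContinuousOn w (Set.Ioi 0)) (n : ℕ) :
    Measurable (truncW w n) := by
  classical
  have h : ContinuousOn (fun x => min (w x) (n:ℝ)) (Set.Ioi 0) := ContinuousOn.inf hw continuousOn_const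
  have := h.measurable_piecewise (g := fun _ => (0:ℝ)) continuousOn_const measurableSet_Ioi
  have e := Set.piecewise_eq_indicator (s := Set.Ioi (0:ℝ)) (f := fun x => min (w x) (n:ℝ))
  unfold truncW
  rw [← e]
  exact this

lemma abs_truncW_le {w : ℝ → ℝ} (hw : ∀ x ∈ Set.Ioi (0:ℝ), 0 ≤ w x) (n : ℕ) (x : ℝ) :
    |truncW w n x| ≤ n := by
  by_cases hx : 0 < x
  · rw [truncW_of_pos w n hx, abs_of_nonneg (le_min (hw x hx) (Nat.cast_nonneg n))]
    exact min_le_right _ _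
  · simp [truncW, hx]

/-- The interaction density `K φ ⊗ φ` is integrable, because the growth condition dominates it by
`k₂ (x^λ + y^λ) φ(x) φ(y)` and `φ` has finite moments of orders `0` and `λ`. -/
lemma integrable_interaction {lam k1 k2 : ℝ} {K : ℝ → ℝ → ℝ} (hK : IsKernel K)
    (hG : GrowthCond lam k1 k2 K) {φ : ℝ → ℝ} (hm : Measurable φ)
    (h0 : Integrable φ (volume.restrict (Set.Ioi (0:ℝ)))) (hl : memX lam φ) :
    Integrable (fun p : ℝ × ℝ => K p.1 p.2 * φ p.1 * φ p.2)
      ((volume.restrict (Set.Ioi (0:ℝ))).prod (volume.restrict (Set.Ioi (0:ℝ)))) := by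
  have hpos : ∀ᵐ p : ℝ × ℝ ∂((volume.restrict (Set.Ioi (0:ℝ))).prod
      (volume.restrict (Set.Ioi (0:ℝ)))), 0 < p.1 ∧ 0 < p.2 := by
    rw [Measure.prod_restrict]
    filter_upwards [ae_restrict_mem (measurableSet_Ioi.prod measurableSet_Ioi)] with p hp
    exact ⟨hp.1, hp.2⟩
  have hl' : Integrable (fun x => x ^ lam * φ x) (volume.restrict (Set.Ioi (0:ℝ))) := hl
  have hdom := ((hl'.mul_prod h0).add (h0.mul_prod hl')).norm.const_mul k2
  refine hdom.mono' ?_ ?_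
  · exact ((hK.1.mul (hm.comp measurable_fst)).mul (hm.comp measurable_snd)).aestronglyMeasurable
  · filter_upwards [hpos] with p hp
    have hx := Real.rpow_nonneg hp.1.le lam
    have hy := Real.rpow_nonneg hp.2.le lam
    have hb := (hG p.1 p.2 hp.1 hp.2).2
    have e : ‖K p.1 p.2 * φ p.1 * φ p.2‖ = K p.1 p.2 * |φ p.1 * φ p.2| := by
      rw [mul_assoc, norm_mul, Real.norm_eq_abs, Real.norm_eq_abs, abs_of_nonneg (hK.2.1 _ _)]
    have e2 : ‖((fun z : ℝ × ℝ => z.1 ^ lam * φ z.1 * φ z.2) +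
        fun z : ℝ × ℝ => φ z.1 * (z.2 ^ lam * φ z.2)) p‖
        = (p.1 ^ lam + p.2 ^ lam) * |φ p.1 * φ p.2| := by
      rw [Pi.add_apply, show p.1 ^ lam * φ p.1 * φ p.2 + φ p.1 * (p.2 ^ lam * φ p.2)
        = (p.1 ^ lam + p.2 ^ lam) * (φ p.1 * φ p.2) by ring, norm_mul, Real.norm_eq_abs,
        Real.norm_eq_abs, abs_of_nonneg (add_nonneg hx hy)]
    rw [e, e2, ← mul_assoc]
    exact mul_le_mul_of_nonneg_right hb (abs_nonneg _)

/-- The uniform estimate `(k₁/2) M_λ(φ) ∫ min(w, n) φ ≤ ∫ w S`. -/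
lemma truncated_bound {lam k1 k2 : ℝ} (hk1 : 0 < k1)
    {K : ℝ → ℝ → ℝ} (hK : IsKernel K) (hG : GrowthCond lam k1 k2 K)
    {S : ℝ → ℝ} (hS : SourceX0 S) {φ : ℝ → ℝ} (hφ : IsStationarySol lam K S φ)
    {w : ℝ → ℝ} (hc : ContinuousOn w (Set.Ioi 0)) (hw : ∀ x ∈ Set.Ioi (0:ℝ), 0 ≤ w x)
    (ha : AntitoneOn w (Set.Ioi 0))
    (hwS : MeasureTheory.IntegrableOn (fun x => w x * S x) (Set.Ioi 0)) (n : ℕ) :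
    k1 / 2 * Mom lam φ * ∫ x in Set.Ioi (0:ℝ), truncW w n x * φ x
      ≤ ∫ x in Set.Ioi (0:ℝ), w x * S x := by
  obtain ⟨hm, hnn, h0, hl, heq⟩ := hφ
  have h0 : Integrable φ (volume.restrict (Set.Ioi (0:ℝ))) := by
    simpa [memX, IntegrableOn] using h0
  have hS0 : Integrable S (volume.restrict (Set.Ioi (0:ℝ))) := by
    simpa [memX, IntegrableOn] using hS.2.2
  have hl' : Integrable (fun x => x ^ lam * φ x) (volume.restrict (Set.Ioi (0:ℝ))) := hl
  have hθm := measurable_truncW hc n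
  have hθb := abs_truncW_le hw n
  have hθφ : Integrable (fun x => truncW w n x * φ x) (volume.restrict (Set.Ioi (0:ℝ))) :=
    h0.bdd_mul hθm.aestronglyMeasurable (Eventually.of_forall hθb)
  have hθS : Integrable (fun x => S x * truncW w n x) (volume.restrict (Set.Ioi (0:ℝ))) :=
    hS0.mul_bdd (c := n) hθm.aestronglyMeasurable (Eventually.of_forall hθb)
  have key := heq (truncW w n) hθm ⟨n, hθb⟩
  have hsrc : ∫ x in Set.Ioi (0:ℝ), S x * truncW w n x ≤ ∫ x in Set.Ioi (0:ℝ), w x * S x := by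
    refine integral_mono_ae hθS hwS ?_
    filter_upwards [hS.2.1, ae_restrict_mem measurableSet_Ioi] with x hx hx0
    rw [truncW_of_pos w n hx0, mul_comm]
    exact mul_le_mul_of_nonneg_right (min_le_left _ _) hx
  have hint := integrable_interaction hK hG hm h0 hl
  have hF : Integrable (fun p : ℝ × ℝ => (truncW w n (p.1 + p.2) - truncW w n p.1
      - truncW w n p.2) * K p.1 p.2 * φ p.1 * φ p.2)
      ((volume.restrict (Set.Ioi (0:ℝ))).prod (volume.restrict (Set.Ioi (0:ℝ)))) := by
    have hmeas : Measurable (fun p : ℝ × ℝ => truncW w n (p.1 + p.2) - truncW w n p.1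
      - truncW w n p.2) := by fun_prop
    have := hint.bdd_mul (c := n + n + n) hmeas.aestronglyMeasurable (Eventually.of_forall (by
      intro p
      rw [Real.norm_eq_abs]
      calc _ ≤ |truncW w n (p.1 + p.2) - truncW w n p.1| + |truncW w n p.2| := abs_sub _ _
        _ ≤ |truncW w n (p.1 + p.2)| + |truncW w n p.1| + |truncW w n p.2| := by
          gcongr; exact abs_sub _ _
        _ ≤ _ := by gcongr <;> exact hθb _))
    refine this.congr (Eventually.of_forall fun p => ?_)
    simp only [mul_assoc]
  have hprod : ∫ p : ℝ × ℝ, -k1 * ((truncW w n p.1 * φ p.1) * (p.2 ^ lam * φ p.2))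
      ∂((volume.restrict (Set.Ioi (0:ℝ))).prod (volume.restrict (Set.Ioi (0:ℝ))))
      = -k1 * ((∫ x in Set.Ioi (0:ℝ), truncW w n x * φ x) * Mom lam φ) := by
    rw [integral_const_mul, integral_prod_mul (fun x => truncW w n x * φ x)
      (fun y => y ^ lam * φ y)]
    rfl
  have hle := integral_mono_ae hF ((hθφ.mul_prod hl').const_mul (-k1)) (by
    have hpos : ∀ᵐ p : ℝ × ℝ ∂((volume.restrict (Set.Ioi (0:ℝ))).prod
        (volume.restrict (Set.Ioi (0:ℝ)))), 0 < p.1 ∧ 0 < p.2 := by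
      rw [Measure.prod_restrict]
      filter_upwards [ae_restrict_mem (measurableSet_Ioi.prod measurableSet_Ioi)] with p hp
      exact ⟨hp.1, hp.2⟩
    filter_upwards [hpos, Measure.quasiMeasurePreserving_fst.ae hnn,
      Measure.quasiMeasurePreserving_snd.ae hnn] with p hp h1 h2
    have hx := Real.rpow_nonneg hp.1.le lam
    have hy := Real.rpow_nonneg hp.2.le lam
    have hb := (hG p.1 p.2 hp.1 hp.2).1
    have hθ0 : 0 ≤ truncW w n p.1 := by
      rw [truncW_of_pos w n hp.1]
      exact le_min (hw _ hp.1) (Nat.cast_nonneg n)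
    have hθ1 : truncW w n (p.1 + p.2) ≤ truncW w n p.2 := by
      rw [truncW_of_pos w n hp.2, truncW_of_pos w n (add_pos hp.1 hp.2)]
      exact min_le_min_right _ (ha hp.2 (add_pos hp.1 hp.2) (by linarith [hp.1]))
    have hKb : k1 * p.2 ^ lam ≤ K p.1 p.2 := by nlinarith
    have step : (truncW w n (p.1 + p.2) - truncW w n p.1 - truncW w n p.2) * K p.1 p.2
        ≤ -(truncW w n p.1 * (k1 * p.2 ^ lam)) := by
      have a1 := mul_le_mul_of_nonneg_left hKb hθ0
      have a2 := mul_le_mul_of_nonneg_right hθ1 (hK.2.1 p.1 p.2)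
      nlinarith
    have := mul_le_mul_of_nonneg_right step (mul_nonneg h1 h2)
    calc _ = _ := mul_assoc _ _ _
      _ ≤ _ := this
      _ = _ := by ring)
  rw [hprod, integral_prod _ hF] at hle
  simp only at hle
  nlinarith

theorem stmt3 (lam k1 k2 : ℝ) (hlam0 : 0 ≤ lam)
    (hk1 : 0 < k1) (hk12 : k1 < k2)
    (K : ℝ → ℝ → ℝ) (hK : IsKernel K) (hG : GrowthCond lam k1 k2 K)
    (S : ℝ → ℝ) (hS : SourceX0 S)
    (φ : ℝ → ℝ) (hφ : IsStationarySol lam K S φ) :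
    (∀ w : ℝ → ℝ, ContinuousOn w (Set.Ioi 0) → (∀ x ∈ Set.Ioi (0:ℝ), 0 ≤ w x) →
      AntitoneOn w (Set.Ioi 0) →
      MeasureTheory.IntegrableOn (fun x => w x * S x) (Set.Ioi 0) →
      MeasureTheory.IntegrableOn (fun x => w x * φ x) (Set.Ioi 0)) ∧
    ∀ m : ℝ, m < 0 → memX m S → memX m φ := by
  have main : ∀ w : ℝ → ℝ, ContinuousOn w (Set.Ioi 0) → (∀ x ∈ Set.Ioi (0:ℝ), 0 ≤ w x) →
      AntitoneOn w (Set.Ioi 0) →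
      MeasureTheory.IntegrableOn (fun x => w x * S x) (Set.Ioi 0) →
      MeasureTheory.IntegrableOn (fun x => w x * φ x) (Set.Ioi 0) := by
    intro w hc hw ha hwS
    have hbound := truncated_bound hk1 hK hG hS hφ hc hw ha hwS
    obtain ⟨hm, hnn, h0, hl, -⟩ := hφ
    have h0 : Integrable φ (volume.restrict (Set.Ioi (0:ℝ))) := by
      simpa [memX, IntegrableOn] using h0
    have hwm : AEMeasurable w (volume.restrict (Set.Ioi (0:ℝ))) :=
      hc.aemeasurable measurableSet_Ioi
    have hnn' : 0 ≤ᵐ[volume.restrict (Set.Ioi (0:ℝ))] fun x => x ^ lam * φ x := by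
      filter_upwards [hnn, ae_restrict_mem measurableSet_Ioi] with x hx hx0
      exact mul_nonneg (Real.rpow_nonneg (le_of_lt hx0) _) hx
    have hM0 : 0 ≤ Mom lam φ := integral_nonneg_of_ae hnn'
    rcases hM0.eq_or_lt with hM | hM
    · have hz := (integral_eq_zero_iff_of_nonneg_ae hnn' hl).1 hM.symm
      refine (integrable_zero ℝ ℝ (volume.restrict (Set.Ioi (0:ℝ)))).congr ?_
      filter_upwards [hz, ae_restrict_mem measurableSet_Ioi] with x hx hx0
      have : φ x = 0 := (mul_eq_zero.1 hx).resolve_left (Real.rpow_pos_of_pos hx0 _).ne'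
      simp [this]
    · have hθφ : ∀ n : ℕ, Integrable (fun x => truncW w n x * φ x)
          (volume.restrict (Set.Ioi (0:ℝ))) := fun n =>
        h0.bdd_mul (measurable_truncW hc n).aestronglyMeasurable
          (Eventually.of_forall (abs_truncW_le hw n))
      -- `truncW w (n + 1)` agrees with `w` on the sublevel set `{truncW w (n + 1) ≤ n}`.
      have hagree : ∀ (n : ℕ) (x : ℝ), 0 < x → truncW w (n + 1) x ≤ n →
          truncW w (n + 1) x = w x := by
        intro n x hx h
        rw [truncW_of_pos w _ hx] at h ⊢
        push_cast at h ⊢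
        rcases min_le_iff.1 h with h | h
        · exact min_eq_left (by linarith)
        · linarith
      have hsm : ∀ n : ℕ, MeasurableSet {x | truncW w (n + 1) x ≤ n} := fun n =>
        measurableSet_le (measurable_truncW hc _) measurable_const
      have hcov : AECover (volume.restrict (Set.Ioi (0:ℝ))) atTop
          (fun n : ℕ => {x | truncW w (n + 1) x ≤ n}) := by
        refine ⟨?_, hsm⟩
        filter_upwards [ae_restrict_mem measurableSet_Ioi] with x hx
        obtain ⟨N, hN⟩ := exists_nat_ge (w x)
        filter_upwards [eventually_ge_atTop N] with n hn
        rw [truncW_of_pos w _ hx]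
        exact (min_le_left _ _).trans (hN.trans (by exact_mod_cast hn))
      have hcongr : ∀ n : ℕ, (fun x => truncW w (n + 1) x * φ x) =ᵐ[
          (volume.restrict (Set.Ioi (0:ℝ))).restrict {x | truncW w (n + 1) x ≤ n}]
          fun x => w x * φ x := by
        intro n
        filter_upwards [ae_restrict_mem (hsm n),
          ae_restrict_of_ae (ae_restrict_mem measurableSet_Ioi)] with x hx hx0
        rw [hagree n x hx0 hx]
      refine hcov.integrable_of_integral_bounded_of_nonneg_ae
        ((∫ x in Set.Ioi (0:ℝ), w x * S x) / (k1 / 2 * Mom lam φ)) (fun n => ?_) ?_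
        (Eventually.of_forall fun n => ?_)
      · exact (hθφ (n + 1)).integrableOn.congr (hcongr n)
      · filter_upwards [hnn, ae_restrict_mem measurableSet_Ioi] with x hx hx0
        exact mul_nonneg (hw x hx0) hx
      · rw [← integral_congr_ae (hcongr n), le_div_iff₀ (by positivity), mul_comm]
        refine le_trans (mul_le_mul_of_nonneg_left ?_ (by positivity)) (hbound (n + 1))
        refine setIntegral_le_integral (hθφ (n + 1)) ?_
        filter_upwards [hnn, ae_restrict_mem measurableSet_Ioi] with x hx hx0
        rw [truncW_of_pos w _ hx0]
        exact mul_nonneg (le_min (hw x hx0) (Nat.cast_nonneg _)) hx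
  refine ⟨main, fun m hm hmS => main (fun x => x ^ m) ?_ ?_ ?_ hmS⟩
  · exact fun x hx => (Real.continuousAt_rpow_const x m (Or.inl (ne_of_gt hx))).continuousWithinAt
  · exact fun x hx => Real.rpow_nonneg (le_of_lt hx) m
  · exact fun x hx y _ hxy => Real.rpow_le_rpow_of_nonpos hx hxy hm.le
end
end

section
/- Let λ ∈ [0,1), let K be a coagulation kernel satisfying the growth condition with exponent λ and constants 0 < k₁ < k₂, let S ∈ X₀⁺ with S ∈ X_λ, and let φ be a stationary solution to the coagulation equation with source S. Then (2^λ / k₂) M_λ(S) ≤ M_λ(φ)² ≤ 2^{1−λ} M_λ(S) / (k₁ (2 − 2^λ)). -/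
/-!
The moment bounds come from testing the equation with `ϑ(x) = x ^ λ`, which gives
`M_λ(S) = (1/2) ∬ (x ^ λ + y ^ λ - (x + y) ^ λ) K(x,y) φ(x) φ(y)`.

This `ϑ` is unbounded, so the identity (`moment_identity`) is obtained from the truncations
`ϑ_n(x) = min(x, n) ^ λ`. Each `ϑ_n` is monotone and subadditive, so
`0 ≤ ϑ_n(x) + ϑ_n(y) - ϑ_n(x + y) ≤ min(x, y) ^ λ`, while `K(x,y) ≤ 2 k₂ max(x, y) ^ λ`; the
integrands are therefore dominated by `2 k₂ x ^ λ y ^ λ φ(x) φ(y)`, and dominated convergence on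
the product space applies.

The bounds then follow from two pointwise inequalities for `A = x ^ λ`, `B = y ^ λ`,
`c = (x + y) ^ λ`, `u = 2 ^ λ`:
* `(A + B - c) (A + B) ≤ 2 ^ (1 - λ) A B`, since `A + B ≤ 2 ^ (1 - λ) c` by concavity and
  `c (A + B - c) ≤ A B` is `(c - A) (c - B) ≥ 0`;
* `u (2 - u) A B ≤ (A + B - c) (A + B)`, since `A + B ≥ c` and `c (A + B - c) ≥ u (2 - u) A B` is
  `(c / A - 1) (c / B - 1) ≤ (u - 1) ^ 2`. With `r = y / x` the left side of the last inequality
  is `((1 + r) ^ λ - 1) ((1 + 1 / r) ^ λ - 1)`, which is symmetric under `r ↦ 1 / r` and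
  decreasing on `[1, ∞)` (`antitone_aux`), hence maximal at `r = 1`.
-/

open MeasureTheory Set Filter

noncomputable section

/-! ### Pointwise inequalities for powers -/

lemma rpow_concave (p : ℝ) (h0 : 0 ≤ p) (h1 : p ≤ 1) (x y a b : ℝ) (hx : 0 ≤ x) (hy : 0 ≤ y)
    (ha : 0 ≤ a) (hb : 0 ≤ b) (hab : a + b = 1) :
    a * x ^ p + b * y ^ p ≤ (a * x + b * y) ^ p :=
  (Real.concaveOn_rpow h0 h1).2 (mem_Ici.mpr hx) (mem_Ici.mpr hy) ha hb hab

/-- The sign of the derivative of `r ↦ ((1 + r) ^ l - 1) * ((1 + r⁻¹) ^ l - 1)`: it amounts to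
concavity of `w ↦ w ^ (1 - l)` at `1 + r⁻¹ = (1 - r⁻²) * 1 + r⁻² * (1 + r)`. -/
lemma deriv_sign (l : ℝ) (h0 : 0 ≤ l) (h1 : l < 1) (r : ℝ) (hr : 1 < r) :
    (1 + r) ^ (l - 1) * ((1 + r⁻¹) ^ l - 1)
      ≤ ((1 + r) ^ l - 1) * ((1 + r⁻¹) ^ (l - 1) * (r ^ 2)⁻¹) := by
  have hr0 : 0 < r := by linarith
  have hri : 0 < r⁻¹ := inv_pos.mpr hr0
  have hw : 0 < 1 + r := by linarith
  have hz : 0 < 1 + r⁻¹ := by linarith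
  have ht1 : (r ^ 2)⁻¹ ≤ 1 := inv_le_one_of_one_le₀ (by nlinarith)
  have ht0 : 0 ≤ (r ^ 2)⁻¹ := by positivity
  have hc := rpow_concave (1 - l) (by linarith) (by linarith) 1 (1 + r)
    (1 - (r ^ 2)⁻¹) (r ^ 2)⁻¹ (by norm_num) hw.le (by linarith) ht0 (by ring)
  have he : (1 - (r ^ 2)⁻¹) * 1 + (r ^ 2)⁻¹ * (1 + r) = 1 + r⁻¹ := by field_simp; ring
  rw [he, Real.one_rpow] at hc
  have hwm : (1 + r) ^ (1 - l) * (1 + r) ^ (l - 1) = 1 := by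
    rw [← Real.rpow_add hw]; simp
  have hzm : (1 + r⁻¹) ^ (1 - l) * (1 + r⁻¹) ^ (l - 1) = 1 := by
    rw [← Real.rpow_add hz]; simp
  have hw' : (1 + r) ^ l = (1 + r) * (1 + r) ^ (l - 1) := by
    rw [Real.rpow_sub_one hw.ne']; field_simp
  have hz' : (1 + r⁻¹) ^ l = (1 + r⁻¹) * (1 + r⁻¹) ^ (l - 1) := by
    rw [Real.rpow_sub_one hz.ne']; field_simp
  have hP : 0 < (1 + r) ^ (l - 1) := Real.rpow_pos_of_pos hw _
  have hQ : 0 < (1 + r⁻¹) ^ (l - 1) := Real.rpow_pos_of_pos hz _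
  rw [hw', hz']
  generalize (1 + r) ^ (l - 1) = P at *
  generalize (1 + r⁻¹) ^ (l - 1) = Q at *
  generalize (1 + r) ^ (1 - l) = P' at *
  generalize (1 + r⁻¹) ^ (1 - l) = Q' at *
  have e1 : P * ((1 + r⁻¹) * Q - 1) = P * Q * (1 + r⁻¹ - Q') := by
    linear_combination P * hzm
  have e2 : ((1 + r) * P - 1) * (Q * (r ^ 2)⁻¹) = P * Q * ((r ^ 2)⁻¹ * (1 + r - P')) := by
    linear_combination (Q * (r ^ 2)⁻¹) * hwm
  rw [e1, e2]
  apply mul_le_mul_of_nonneg_left _ (by positivity)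
  linarith

lemma antitone_aux (l : ℝ) (h0 : 0 ≤ l) (h1 : l < 1) :
    AntitoneOn (fun r : ℝ => ((1 + r) ^ l - 1) * ((1 + r⁻¹) ^ l - 1)) (Ici 1) := by
  have hd : ∀ r : ℝ, 1 ≤ r → HasDerivAt
      (fun r : ℝ => ((1 + r) ^ l - 1) * ((1 + r⁻¹) ^ l - 1))
      ((1 * l * (1 + r) ^ (l - 1)) * ((1 + r⁻¹) ^ l - 1)
        + ((1 + r) ^ l - 1) * ((-(r ^ 2)⁻¹) * l * (1 + r⁻¹) ^ (l - 1))) r := by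
    intro r hr
    have hr0 : 0 < r := by linarith
    have hri : 0 < r⁻¹ := inv_pos.mpr hr0
    exact ((((hasDerivAt_id r).const_add 1).rpow_const
      (Or.inl (by simp only [id]; linarith))).sub_const 1).mul
      ((((hasDerivAt_inv hr0.ne').const_add 1).rpow_const
        (Or.inl (by linarith))).sub_const 1)
  apply antitoneOn_of_deriv_nonpos (convex_Ici 1)
  · exact fun r hr => (hd r hr).continuousAt.continuousWithinAt
  · intro r hr
    rw [interior_Ici] at hr
    exact (hd r (le_of_lt hr)).differentiableAt.differentiableWithinAt
  · intro r hr
    rw [interior_Ici] at hr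
    rw [(hd r (le_of_lt hr)).deriv]
    have := mul_le_mul_of_nonneg_left (deriv_sign l h0 h1 r hr) h0
    linarith

lemma pow_lower_aux (l : ℝ) (h0 : 0 ≤ l) (h1 : l < 1) (x y : ℝ) (hx : 0 < x) (hxy : x ≤ y) :
    2 ^ l * (2 - 2 ^ l) * (x ^ l * y ^ l) ≤ (x + y) ^ l * (x ^ l + y ^ l - (x + y) ^ l) := by
  have hy : 0 < y := by linarith
  have hr : 1 ≤ y / x := (one_le_div hx).mpr hxy
  have h := antitone_aux l h0 h1 (mem_Ici.mpr le_rfl) (mem_Ici.mpr hr) hr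
  have e1 : 1 + y / x = (x + y) / x := by field_simp
  have e2 : 1 + (y / x)⁻¹ = (x + y) / y := by field_simp; ring
  simp only [e1, e2] at h
  rw [Real.div_rpow (by linarith) hx.le, Real.div_rpow (by linarith) hy.le] at h
  norm_num at h
  have hA : 0 < x ^ l := Real.rpow_pos_of_pos hx _
  have hB : 0 < y ^ l := Real.rpow_pos_of_pos hy _
  have e3 : ((x + y) ^ l / x ^ l - 1) * ((x + y) ^ l / y ^ l - 1) * (x ^ l * y ^ l)
      = ((x + y) ^ l - x ^ l) * ((x + y) ^ l - y ^ l) := by field_simp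
  have h2 := mul_le_mul_of_nonneg_right h (mul_pos hA hB).le
  rw [e3] at h2
  linarith

lemma pow_subadd (l : ℝ) (h0 : 0 ≤ l) (h1 : l ≤ 1) (x y : ℝ) (hx : 0 ≤ x) (hy : 0 ≤ y) :
    (x + y) ^ l ≤ x ^ l + y ^ l := Real.rpow_add_le_add_rpow hx hy h0 h1

lemma pow_lower (l : ℝ) (h0 : 0 ≤ l) (h1 : l < 1) (x y : ℝ) (hx : 0 < x) (hy : 0 < y) :
    2 ^ l * (2 - 2 ^ l) * (x ^ l * y ^ l) ≤ (x ^ l + y ^ l - (x + y) ^ l) * (x ^ l + y ^ l) := by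
  have h : 2 ^ l * (2 - 2 ^ l) * (x ^ l * y ^ l)
      ≤ (x + y) ^ l * (x ^ l + y ^ l - (x + y) ^ l) := by
    rcases le_total x y with hxy | hxy
    · exact pow_lower_aux l h0 h1 x y hx hxy
    · have := pow_lower_aux l h0 h1 y x hy hxy
      rw [add_comm y x] at this
      linarith
  have hs := pow_subadd l h0 h1.le x y hx.le hy.le
  nlinarith [sq_nonneg (x ^ l + y ^ l - (x + y) ^ l)]

lemma pow_upper (l : ℝ) (h0 : 0 ≤ l) (h1 : l < 1) (x y : ℝ) (hx : 0 < x) (hy : 0 < y) :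
    (x ^ l + y ^ l - (x + y) ^ l) * (x ^ l + y ^ l) ≤ 2 ^ (1 - l) * (x ^ l * y ^ l) := by
  have hs := pow_subadd l h0 h1.le x y hx.le hy.le
  have hA : x ^ l ≤ (x + y) ^ l := Real.rpow_le_rpow hx.le (by linarith) h0
  have hB : y ^ l ≤ (x + y) ^ l := Real.rpow_le_rpow hy.le (by linarith) h0
  have hc := rpow_concave l h0 h1.le x y (1 / 2) (1 / 2) hx.le hy.le (by norm_num)
    (by norm_num) (by norm_num)
  have e : (1 / 2 : ℝ) * x + 1 / 2 * y = (x + y) / 2 := by ring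
  have h2 : (0 : ℝ) < 2 ^ l := by positivity
  rw [e, Real.div_rpow (by linarith) (by norm_num)] at hc
  have e2 : (2 : ℝ) ^ (1 - l) = 2 / 2 ^ l := by
    rw [Real.rpow_sub (by norm_num), Real.rpow_one]
  have hd : x ^ l + y ^ l ≤ 2 ^ (1 - l) * (x + y) ^ l := by
    have : (2 : ℝ) / 2 ^ l * (x + y) ^ l = 2 * ((x + y) ^ l / 2 ^ l) := by ring
    rw [e2, this]; linarith
  have h3 : (0 : ℝ) < 2 ^ (1 - l) := by positivity
  calc (x ^ l + y ^ l - (x + y) ^ l) * (x ^ l + y ^ l)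
      ≤ (x ^ l + y ^ l - (x + y) ^ l) * (2 ^ (1 - l) * (x + y) ^ l) :=
        mul_le_mul_of_nonneg_left hd (by linarith)
    _ = 2 ^ (1 - l) * ((x ^ l + y ^ l - (x + y) ^ l) * (x + y) ^ l) := by ring
    _ ≤ _ := by
      apply mul_le_mul_of_nonneg_left _ h3.le
      nlinarith [mul_nonneg (sub_nonneg.mpr hA) (sub_nonneg.mpr hB)]

/-! ### The truncated test functions -/

/-- The bounded test function `min(x, n) ^ l`, with negative arguments sent to `0`. -/
def trunc (l : ℝ) (n : ℕ) (x : ℝ) : ℝ := (min (max x 0) n) ^ l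

lemma trunc_nonneg (l : ℝ) (n : ℕ) (x : ℝ) : 0 ≤ trunc l n x :=
  Real.rpow_nonneg (le_min (le_max_right _ _) (Nat.cast_nonneg n)) _

lemma trunc_mono (l : ℝ) (h0 : 0 ≤ l) (n : ℕ) : Monotone (trunc l n) := fun _ _ h =>
  Real.rpow_le_rpow (le_min (le_max_right _ _) (Nat.cast_nonneg n))
    (min_le_min_right _ (max_le_max_right _ h)) h0

lemma trunc_le (l : ℝ) (h0 : 0 ≤ l) (n : ℕ) (x : ℝ) (hx : 0 < x) : trunc l n x ≤ x ^ l := by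
  apply Real.rpow_le_rpow (le_min (le_max_right _ _) (Nat.cast_nonneg n)) _ h0
  rw [max_eq_left hx.le]; exact min_le_left _ _

lemma trunc_le_const (l : ℝ) (h0 : 0 ≤ l) (n : ℕ) (x : ℝ) : trunc l n x ≤ (n : ℝ) ^ l :=
  Real.rpow_le_rpow (le_min (le_max_right _ _) (Nat.cast_nonneg n)) (min_le_right _ _) h0

lemma trunc_measurable (l : ℝ) (n : ℕ) : Measurable (trunc l n) := by
  unfold trunc; fun_prop

lemma trunc_subadd (l : ℝ) (h0 : 0 ≤ l) (h1 : l ≤ 1) (n : ℕ) (x y : ℝ)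
    (hx : 0 < x) (hy : 0 < y) : trunc l n (x + y) ≤ trunc l n x + trunc l n y := by
  have hn : (0 : ℝ) ≤ n := Nat.cast_nonneg n
  unfold trunc
  rw [max_eq_left hx.le, max_eq_left hy.le, max_eq_left (add_pos hx hy).le]
  refine le_trans (Real.rpow_le_rpow (le_min (by linarith) hn) ?_ h0)
    (pow_subadd l h0 h1 _ _ (le_min hx.le hn) (le_min hy.le hn))
  rcases le_total x n with h | h <;> rcases le_total y n with h' | h' <;>
    simp only [min_eq_left h, min_eq_right h, min_eq_left h', min_eq_right h']
  · exact min_le_left _ _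
  all_goals exact (min_le_right _ _).trans (by linarith)

lemma trunc_tendsto (l : ℝ) (x : ℝ) (hx : 0 < x) :
    Tendsto (fun n : ℕ => trunc l n x) atTop (nhds (x ^ l)) := by
  apply tendsto_const_nhds.congr'
  filter_upwards [eventually_ge_atTop ⌈x⌉₊] with n hn
  have : x ≤ n := Nat.ceil_le.mp hn
  rw [trunc, max_eq_left hx.le, min_eq_left this]

/-- The uniform domination of the truncated interaction: the defect of additivity is at most
`min(x, y) ^ l` and the kernel at most `2 * k2 * max(x, y) ^ l`. -/
lemma trunc_dom (l k2 : ℝ) (h0 : 0 ≤ l) (h1 : l < 1) (hk2 : 0 < k2) (n : ℕ) (x y κ : ℝ)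
    (hx : 0 < x) (hy : 0 < y) (hκ0 : 0 ≤ κ) (hκ : κ ≤ k2 * (x ^ l + y ^ l)) :
    |(trunc l n (x + y) - trunc l n x - trunc l n y) * κ| ≤ 2 * k2 * (x ^ l * y ^ l) := by
  have hs := trunc_subadd l h0 h1.le n x y hx hy
  have hmx := trunc_mono l h0 n (show x ≤ x + y by linarith)
  have hmy := trunc_mono l h0 n (show y ≤ x + y by linarith)
  have hbx := trunc_le l h0 n x hx
  have hby := trunc_le l h0 n y hy
  have hA : 0 < x ^ l := Real.rpow_pos_of_pos hx _
  have hB : 0 < y ^ l := Real.rpow_pos_of_pos hy _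
  rw [abs_mul, abs_of_nonneg hκ0, abs_of_nonpos (by linarith)]
  rcases le_total x y with h | h
  · have hAB : x ^ l ≤ y ^ l := Real.rpow_le_rpow hx.le h h0
    calc _ ≤ x ^ l * (k2 * (y ^ l + y ^ l)) := by
          apply mul_le_mul (by linarith) (hκ.trans _) hκ0 hA.le
          apply mul_le_mul_of_nonneg_left _ hk2.le; linarith
      _ = _ := by ring
  · have hAB : y ^ l ≤ x ^ l := Real.rpow_le_rpow hy.le h h0
    calc _ ≤ y ^ l * (k2 * (x ^ l + x ^ l)) := by
          apply mul_le_mul (by linarith) (hκ.trans _) hκ0 hB.le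
          apply mul_le_mul_of_nonneg_left _ hk2.le; linarith
      _ = _ := by ring

/-! ### Passage to the limit -/

/-- Lebesgue measure on `(0, ∞)`. -/
abbrev posVol : Measure ℝ := volume.restrict (Ioi (0 : ℝ))

lemma ae_pos_prod : ∀ᵐ p ∂(posVol.prod posVol), 0 < p.1 ∧ 0 < p.2 := by
  have h : ∀ᵐ x ∂posVol, 0 < x := ae_restrict_mem measurableSet_Ioi
  exact (Measure.quasiMeasurePreserving_fst.ae h).and (Measure.quasiMeasurePreserving_snd.ae h)

lemma moment_identity (lam k1 k2 : ℝ) (hlam0 : 0 ≤ lam) (hlam1 : lam < 1) (hk2 : 0 < k2)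
    (K : ℝ → ℝ → ℝ) (hK : IsKernel K) (hG : GrowthCond lam k1 k2 K)
    (S : ℝ → ℝ) (hS : SourceX0 S) (hSlam : memX lam S)
    (φ : ℝ → ℝ) (hφ : IsStationarySol lam K S φ) :
    Integrable (fun p : ℝ × ℝ => (p.1 ^ lam + p.2 ^ lam - (p.1 + p.2) ^ lam) * K p.1 p.2
      * φ p.1 * φ p.2) (posVol.prod posVol) ∧
    Mom lam S = 1 / 2 * ∫ p : ℝ × ℝ, (p.1 ^ lam + p.2 ^ lam - (p.1 + p.2) ^ lam) * K p.1 p.2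
      * φ p.1 * φ p.2 ∂(posVol.prod posVol) := by
  obtain ⟨hφm, hφ0, -, hφl, heq⟩ := hφ
  have hKm := hK.1
  let F : ℕ → ℝ × ℝ → ℝ := fun n p =>
    (trunc lam n (p.1 + p.2) - trunc lam n p.1 - trunc lam n p.2) * K p.1 p.2 * φ p.1 * φ p.2
  let G : ℝ × ℝ → ℝ := fun p =>
    ((p.1 + p.2) ^ lam - p.1 ^ lam - p.2 ^ lam) * K p.1 p.2 * φ p.1 * φ p.2
  let D : ℝ × ℝ → ℝ := fun p =>
    2 * k2 * (|p.1 ^ lam * φ p.1| * |p.2 ^ lam * φ p.2|)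
  have hD : Integrable D (posVol.prod posVol) := (hφl.abs.mul_prod hφl.abs).const_mul (2 * k2)
  have hFm : ∀ n, Measurable (F n) := by
    intro n
    have ht := trunc_measurable lam n
    fun_prop
  have hFD : ∀ n, ∀ᵐ p ∂(posVol.prod posVol), ‖F n p‖ ≤ D p := by
    intro n
    filter_upwards [ae_pos_prod] with p hp
    have h := trunc_dom lam k2 hlam0 hlam1 hk2 n p.1 p.2 (K p.1 p.2) hp.1 hp.2
      (hK.2.1 _ _) (hG _ _ hp.1 hp.2).2
    have hA : 0 < p.1 ^ lam := Real.rpow_pos_of_pos hp.1 _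
    have hB : 0 < p.2 ^ lam := Real.rpow_pos_of_pos hp.2 _
    simp only [F, D, Real.norm_eq_abs]
    rw [abs_mul, abs_mul _ (φ p.1), abs_mul _ (φ p.1), abs_mul _ (φ p.2), abs_of_pos hA,
      abs_of_pos hB]
    calc _ ≤ 2 * k2 * (p.1 ^ lam * p.2 ^ lam) * |φ p.1| * |φ p.2| := by gcongr
      _ = _ := by ring
  have hlim : ∀ᵐ p ∂(posVol.prod posVol), Tendsto (fun n => F n p) atTop (nhds (G p)) := by
    filter_upwards [ae_pos_prod] with p hp
    exact (((((trunc_tendsto lam _ (add_pos hp.1 hp.2)).sub (trunc_tendsto lam _ hp.1)).sub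
      (trunc_tendsto lam _ hp.2)).mul_const _).mul_const _).mul_const _
  have hGi : Integrable G (posVol.prod posVol) := by
    refine hD.mono' (by fun_prop) ?_
    filter_upwards [hlim, ae_all_iff.mpr hFD] with p h1 h2
    exact le_of_tendsto h1.norm (Eventually.of_forall h2)
  have hT := tendsto_integral_of_dominated_convergence D
    (fun n => (hFm n).aestronglyMeasurable) hD hFD hlim
  have hTS : Tendsto (fun n : ℕ => ∫ x in Ioi (0 : ℝ), S x * trunc lam n x) atTop
      (nhds (Mom lam S)) := by
    refine tendsto_integral_of_dominated_convergence (fun x => |x ^ lam * S x|)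
      (fun n => (hS.1.mul (trunc_measurable lam n)).aestronglyMeasurable) hSlam.abs ?_ ?_
    · intro n
      filter_upwards [ae_restrict_mem measurableSet_Ioi] with x hx
      have hA : 0 < x ^ lam := Real.rpow_pos_of_pos hx _
      rw [Real.norm_eq_abs, abs_mul, abs_mul, abs_of_pos hA, abs_of_nonneg (trunc_nonneg _ _ _),
        mul_comm]
      exact mul_le_mul_of_nonneg_right (trunc_le lam hlam0 n x hx) (abs_nonneg _)
    · filter_upwards [ae_restrict_mem measurableSet_Ioi] with x hx
      rw [mul_comm (x ^ lam)]
      exact (trunc_tendsto lam x hx).const_mul (S x)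
  have hz : ∀ n : ℕ, 1 / 2 * (∫ p, F n p ∂(posVol.prod posVol))
      + ∫ x in Ioi (0 : ℝ), S x * trunc lam n x = 0 := by
    intro n
    have h := heq (trunc lam n) (trunc_measurable lam n)
      ⟨(n : ℝ) ^ lam, fun x => by
        rw [abs_of_nonneg (trunc_nonneg _ _ _)]; exact trunc_le_const lam hlam0 n x⟩
    rw [integral_prod _ (hD.mono' (hFm n).aestronglyMeasurable (hFD n))]
    exact h
  have h0 := tendsto_nhds_unique ((hT.const_mul (1 / 2)).add hTS)
    (by simp only [hz]; exact tendsto_const_nhds)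
  have hneg : (fun p : ℝ × ℝ => (p.1 ^ lam + p.2 ^ lam - (p.1 + p.2) ^ lam) * K p.1 p.2
      * φ p.1 * φ p.2) = fun p => - G p := by
    funext p; simp only [G]; ring
  rw [hneg]
  refine ⟨hGi.neg, ?_⟩
  rw [integral_neg]
  linarith

theorem stmt5 (lam k1 k2 : ℝ) (hlam0 : 0 ≤ lam) (hlam1 : lam < 1)
    (hk1 : 0 < k1) (hk12 : k1 < k2)
    (K : ℝ → ℝ → ℝ) (hK : IsKernel K) (hG : GrowthCond lam k1 k2 K)
    (S : ℝ → ℝ) (hS : SourceX0 S) (hSlam : memX lam S)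
    (φ : ℝ → ℝ) (hφ : IsStationarySol lam K S φ) :
    (2:ℝ) ^ lam / k2 * Mom lam S ≤ (Mom lam φ) ^ 2 ∧
    (Mom lam φ) ^ 2 ≤ (2:ℝ) ^ (1 - lam) * Mom lam S / (k1 * (2 - (2:ℝ) ^ lam)) := by
  have hk2 : 0 < k2 := hk1.trans hk12
  obtain ⟨hI, hM⟩ := moment_identity lam k1 k2 hlam0 hlam1 hk2 K hK hG S hS hSlam φ hφ
  obtain ⟨-, hφ0, -, hφl, -⟩ := hφ
  have hQi : Integrable (fun p : ℝ × ℝ => (p.1 ^ lam * φ p.1) * (p.2 ^ lam * φ p.2))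
      (posVol.prod posVol) := hφl.mul_prod hφl
  have hQ : ∫ p : ℝ × ℝ, (p.1 ^ lam * φ p.1) * (p.2 ^ lam * φ p.2) ∂(posVol.prod posVol)
      = (Mom lam φ) ^ 2 := by
    rw [integral_prod_mul (fun x => x ^ lam * φ x) (fun x => x ^ lam * φ x), sq]; rfl
  have hφp : ∀ᵐ p ∂(posVol.prod posVol), 0 ≤ φ p.1 ∧ 0 ≤ φ p.2 :=
    (Measure.quasiMeasurePreserving_fst.ae hφ0).and (Measure.quasiMeasurePreserving_snd.ae hφ0)
  have hup := integral_mono_ae hI (hQi.const_mul (k2 * 2 ^ (1 - lam))) (by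
    filter_upwards [ae_pos_prod, hφp] with p hp hf
    have hs := pow_subadd lam hlam0 hlam1.le p.1 p.2 hp.1.le hp.2.le
    have h := pow_upper lam hlam0 hlam1 p.1 p.2 hp.1 hp.2
    have hk := (hG _ _ hp.1 hp.2).2
    have h1 : (p.1 ^ lam + p.2 ^ lam - (p.1 + p.2) ^ lam) * K p.1 p.2
        ≤ k2 * (2 ^ (1 - lam) * (p.1 ^ lam * p.2 ^ lam)) := by
      have := mul_le_mul_of_nonneg_left hk (sub_nonneg.mpr hs)
      have := mul_le_mul_of_nonneg_left h hk2.le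
      linarith
    have := mul_le_mul_of_nonneg_right h1 (mul_nonneg hf.1 hf.2)
    linarith)
  have hlo := integral_mono_ae (hQi.const_mul (k1 * (2 ^ lam * (2 - 2 ^ lam)))) hI (by
    filter_upwards [ae_pos_prod, hφp] with p hp hf
    have hs := pow_subadd lam hlam0 hlam1.le p.1 p.2 hp.1.le hp.2.le
    have h := pow_lower lam hlam0 hlam1 p.1 p.2 hp.1 hp.2
    have hk := (hG _ _ hp.1 hp.2).1
    have h1 : k1 * (2 ^ lam * (2 - 2 ^ lam) * (p.1 ^ lam * p.2 ^ lam))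
        ≤ (p.1 ^ lam + p.2 ^ lam - (p.1 + p.2) ^ lam) * K p.1 p.2 := by
      have := mul_le_mul_of_nonneg_left hk (sub_nonneg.mpr hs)
      have := mul_le_mul_of_nonneg_left h hk1.le
      linarith
    have := mul_le_mul_of_nonneg_right h1 (mul_nonneg hf.1 hf.2)
    linarith)
  rw [integral_const_mul, hQ] at hup hlo
  have e2 : (2 : ℝ) ^ (1 - lam) = 2 / 2 ^ lam := by
    rw [Real.rpow_sub (by norm_num), Real.rpow_one]
  have hu : (0 : ℝ) < 2 ^ lam := by positivity
  have hu2 : (2 : ℝ) ^ lam < 2 := by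
    simpa using Real.rpow_lt_rpow_of_exponent_lt (x := 2) (by norm_num) hlam1
  rw [e2] at hup ⊢
  generalize (2 : ℝ) ^ lam = u at *
  generalize Mom lam φ ^ 2 = M at *
  constructor
  · have h3 : Mom lam S ≤ k2 / u * M := by
      have : k2 * (2 / u) * M = 2 * (k2 / u * M) := by ring
      linarith
    calc u / k2 * Mom lam S ≤ u / k2 * (k2 / u * M) :=
          mul_le_mul_of_nonneg_left h3 (by positivity)
      _ = M := by field_simp
  · have hpos : 0 < k1 * (2 - u) := mul_pos hk1 (by linarith)
    rw [le_div_iff₀ hpos, div_mul_eq_mul_div, le_div_iff₀ hu]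
    linarith
end
end

section
/- Let λ ∈ [0,1), let K be a coagulation kernel satisfying the growth condition with exponent λ and constants 0 < k₁ < k₂, let S ∈ X₀⁺ with S ∈ X_λ, and let φ be a stationary solution to the coagulation equation with source S. Then M_λ(S) = (1/2)∫₀^∞∫₀^∞ (x^λ + y^λ − (x+y)^λ) K(x,y) φ(x) φ(y) dy dx. -/
/-!
Test the stationary equation against the truncated powers `ϑₙ(x) = min(x, n)^λ`. Such a `ϑₙ` is
nonnegative, nondecreasing and subadditive, so
`0 ≤ ϑₙ(x) + ϑₙ(y) - ϑₙ(x+y) ≤ min(ϑₙ(x), ϑₙ(y)) ≤ min(x, y)^λ`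
(`truncPow_defect_nonneg`, `truncPow_defect_le`). Since `K(x,y) ≤ 2 k₂ max(x,y)^λ`, the integrand
in the weak formulation is dominated, uniformly in `n`, by
`2 k₂ x^λ |φ(x)| y^λ |φ(y)|`, which is integrable because `φ ∈ X_λ`. Dominated convergence in the
double integral and in the source term lets `n → ∞`.
-/


open MeasureTheory Set Filter

noncomputable section

open Topology

/-- The truncated power `min(x, n)^λ`, extended to negative `x` by its value at `0`. -/
def truncPow (lam : ℝ) (n : ℕ) (x : ℝ) : ℝ := (min (max x 0) (n : ℝ)) ^ lam

lemma measurable_truncPow (lam : ℝ) (n : ℕ) : Measurable (truncPow lam n) := by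
  unfold truncPow; fun_prop

lemma truncPow_nonneg (lam : ℝ) (n : ℕ) (x : ℝ) : 0 ≤ truncPow lam n x :=
  Real.rpow_nonneg (le_min (le_max_right _ _) n.cast_nonneg) _

lemma truncPow_le_const {lam : ℝ} (h0 : 0 ≤ lam) (n : ℕ) (x : ℝ) :
    truncPow lam n x ≤ (n : ℝ) ^ lam :=
  Real.rpow_le_rpow (le_min (le_max_right _ _) n.cast_nonneg) (min_le_right _ _) h0

lemma truncPow_le_rpow {lam : ℝ} (h0 : 0 ≤ lam) (n : ℕ) {x : ℝ} (hx : 0 < x) :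
    truncPow lam n x ≤ x ^ lam := by
  refine Real.rpow_le_rpow (le_min (le_max_right _ _) n.cast_nonneg) ?_ h0
  rw [max_eq_left hx.le]
  exact min_le_left _ _

lemma truncPow_mono {lam : ℝ} (h0 : 0 ≤ lam) (n : ℕ) : Monotone (truncPow lam n) := fun _ _ h =>
  Real.rpow_le_rpow (le_min (le_max_right _ _) n.cast_nonneg)
    (min_le_min_right _ (max_le_max_right _ h)) h0

lemma truncPow_tendsto (lam : ℝ) {x : ℝ} (hx : 0 < x) :
    Tendsto (fun n => truncPow lam n x) atTop (𝓝 (x ^ lam)) := by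
  refine tendsto_const_nhds.congr' ?_
  filter_upwards [tendsto_natCast_atTop_atTop.eventually_ge_atTop x] with n hn
  rw [truncPow, max_eq_left hx.le, min_eq_left hn]

/-- Subadditivity of the truncated power. -/
lemma truncPow_defect_nonneg {lam : ℝ} (h0 : 0 ≤ lam) (h1 : lam ≤ 1) (n : ℕ) {x y : ℝ}
    (hx : 0 < x) (hy : 0 < y) :
    0 ≤ truncPow lam n x + truncPow lam n y - truncPow lam n (x + y) := by
  have hn : (0 : ℝ) ≤ n := n.cast_nonneg
  have hxy : 0 < x + y := add_pos hx hy
  have key : min (x + y) (n : ℝ) ≤ min x n + min y n := by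
    rcases min_cases x (n : ℝ) with h | h <;> rcases min_cases y (n : ℝ) with h' | h' <;>
      rcases min_cases (x + y) (n : ℝ) with h'' | h'' <;> linarith
  rw [sub_nonneg]
  unfold truncPow
  rw [max_eq_left hx.le, max_eq_left hy.le, max_eq_left hxy.le]
  exact (Real.rpow_le_rpow (le_min hxy.le hn) key h0).trans
    (Real.rpow_add_le_add_rpow (le_min hx.le hn) (le_min hy.le hn) h0 h1)

lemma truncPow_defect_le {lam : ℝ} (h0 : 0 ≤ lam) (n : ℕ) {x y : ℝ}
    (hx : 0 < x) (hy : 0 < y) :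
    truncPow lam n x + truncPow lam n y - truncPow lam n (x + y) ≤ min x y ^ lam := by
  have hmx := truncPow_mono h0 n (show x ≤ x + y by linarith)
  have hmy := truncPow_mono h0 n (show y ≤ x + y by linarith)
  rcases min_choice x y with h | h <;> rw [h]
  · linarith [truncPow_le_rpow h0 n hx]
  · linarith [truncPow_le_rpow h0 n hy]

/-- The defect of `ϑₙ` times a kernel of growth `λ` is at most `2 k₂ x^λ y^λ`: the smaller variable
comes from the defect and the larger one from the kernel. -/
lemma abs_defect_mul_kernel_le {lam k2 : ℝ} {K : ℝ → ℝ → ℝ} (h0 : 0 ≤ lam) (h1 : lam ≤ 1)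
    (hk2 : 0 ≤ k2) {x y : ℝ} (hx : 0 < x) (hy : 0 < y) (hK0 : 0 ≤ K x y)
    (hK : K x y ≤ k2 * (x ^ lam + y ^ lam)) (n : ℕ) :
    |truncPow lam n (x + y) - truncPow lam n x - truncPow lam n y| * K x y
      ≤ 2 * k2 * (x ^ lam * y ^ lam) := by
  have hd : |truncPow lam n (x + y) - truncPow lam n x - truncPow lam n y| ≤ min x y ^ lam := by
    rw [abs_le]
    have hmin : 0 ≤ min x y ^ lam := Real.rpow_nonneg (le_min hx.le hy.le) _
    constructor
    · linarith [truncPow_defect_le h0 n hx hy]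
    · linarith [truncPow_defect_nonneg h0 h1 n hx hy]
  have hmax : x ^ lam + y ^ lam ≤ 2 * max x y ^ lam := by
    have := Real.rpow_le_rpow hx.le (le_max_left x y) h0
    have := Real.rpow_le_rpow hy.le (le_max_right x y) h0
    linarith
  have hprod : min x y ^ lam * max x y ^ lam = x ^ lam * y ^ lam := by
    rw [← Real.mul_rpow (le_min hx.le hy.le) (hx.le.trans (le_max_left _ _)), min_mul_max,
      Real.mul_rpow hx.le hy.le]
  calc _ ≤ min x y ^ lam * (k2 * (2 * max x y ^ lam)) :=
        mul_le_mul hd (hK.trans (mul_le_mul_of_nonneg_left hmax hk2)) hK0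
          (Real.rpow_nonneg (le_min hx.le hy.le) _)
    _ = 2 * k2 * (min x y ^ lam * max x y ^ lam) := by ring
    _ = _ := by rw [hprod]

theorem stmt6 (lam k1 k2 : ℝ) (hlam0 : 0 ≤ lam) (hlam1 : lam < 1)
    (hk1 : 0 < k1) (hk12 : k1 < k2)
    (K : ℝ → ℝ → ℝ) (hK : IsKernel K) (hG : GrowthCond lam k1 k2 K)
    (S : ℝ → ℝ) (hS : SourceX0 S) (hSlam : memX lam S)
    (φ : ℝ → ℝ) (hφ : IsStationarySol lam K S φ) :
    Mom lam S = (1 / 2) * ∫ x in Set.Ioi (0:ℝ), ∫ y in Set.Ioi (0:ℝ),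
      (x ^ lam + y ^ lam - (x + y) ^ lam) * K x y * φ x * φ y := by
  obtain ⟨hφm, -, -, hφlam, hweak⟩ := hφ
  obtain ⟨hSm, -, -⟩ := hS
  obtain ⟨hKm, hK0, -⟩ := hK
  set μ : Measure ℝ := volume.restrict (Ioi 0) with hμ
  have hμμ : ∀ᵐ p ∂(μ.prod μ), 0 < p.1 ∧ 0 < p.2 := by
    rw [hμ, Measure.prod_restrict]
    filter_upwards [ae_restrict_mem (measurableSet_Ioi.prod measurableSet_Ioi)] with p hp
    exact hp
  let F : ℕ → ℝ × ℝ → ℝ := fun n p =>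
    (truncPow lam n (p.1 + p.2) - truncPow lam n p.1 - truncPow lam n p.2)
      * K p.1 p.2 * φ p.1 * φ p.2
  let G : ℝ × ℝ → ℝ := fun p =>
    ((p.1 + p.2) ^ lam - p.1 ^ lam - p.2 ^ lam) * K p.1 p.2 * φ p.1 * φ p.2
  let B : ℝ × ℝ → ℝ := fun p =>
    2 * k2 * (|p.1 ^ lam * φ p.1| * |p.2 ^ lam * φ p.2|)
  have hBint : Integrable B (μ.prod μ) :=
    (Integrable.mul_prod (f := fun x : ℝ => |x ^ lam * φ x|)
      (g := fun x : ℝ => |x ^ lam * φ x|) (Integrable.abs hφlam)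
      (Integrable.abs hφlam)).const_mul (2 * k2)
  have hFm : ∀ n, AEStronglyMeasurable (F n) (μ.prod μ) := fun n => by
    have := measurable_truncPow lam n
    exact Measurable.aestronglyMeasurable (by fun_prop)
  have hFB : ∀ n, ∀ᵐ p ∂(μ.prod μ), ‖F n p‖ ≤ B p := fun n => by
    filter_upwards [hμμ] with p ⟨hx, hy⟩
    have h := abs_defect_mul_kernel_le hlam0 hlam1.le (hk1.trans hk12).le hx hy
      (hK0 p.1 p.2) (hG p.1 p.2 hx hy).2 n
    have hxl := Real.rpow_nonneg hx.le lam
    have hyl := Real.rpow_nonneg hy.le lam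
    simp only [F, B, Real.norm_eq_abs, abs_mul, abs_of_nonneg (hK0 p.1 p.2),
      abs_of_nonneg hxl, abs_of_nonneg hyl]
    calc _ ≤ 2 * k2 * (p.1 ^ lam * p.2 ^ lam) * |φ p.1| * |φ p.2| := by gcongr
      _ = _ := by ring
  have hlim : ∀ᵐ p ∂(μ.prod μ), Tendsto (fun n => F n p) atTop (𝓝 (G p)) := by
    filter_upwards [hμμ] with p ⟨hx, hy⟩
    exact (((((truncPow_tendsto lam (add_pos hx hy)).sub (truncPow_tendsto lam hx)).sub
      (truncPow_tendsto lam hy)).mul_const _).mul_const _).mul_const _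
  have hGint : Integrable G (μ.prod μ) := by
    refine hBint.mono' (Measurable.aestronglyMeasurable (by fun_prop)) ?_
    filter_upwards [hlim, ae_all_iff.2 hFB] with p hp hb
    exact le_of_tendsto hp.norm (Eventually.of_forall hb)
  have hdouble : Tendsto (fun n => ∫ x, ∫ y, F n (x, y) ∂μ ∂μ) atTop
      (𝓝 (∫ x, ∫ y, G (x, y) ∂μ ∂μ)) := by
    have h := tendsto_integral_of_dominated_convergence B hFm hBint hFB hlim
    rw [integral_prod _ hGint] at h
    refine h.congr fun n => ?_
    exact integral_prod _ (hBint.mono' (hFm n) (hFB n))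
  have hsource : Tendsto (fun n => ∫ x, S x * truncPow lam n x ∂μ) atTop
      (𝓝 (∫ x, S x * x ^ lam ∂μ)) := by
    refine tendsto_integral_of_dominated_convergence (fun x => |x ^ lam * S x|)
      (fun n => (hSm.mul (measurable_truncPow lam n)).aestronglyMeasurable)
      (Integrable.abs hSlam) (fun n => ?_) ?_
    · filter_upwards [ae_restrict_mem measurableSet_Ioi] with x (hx : 0 < x)
      rw [Real.norm_eq_abs, abs_mul, abs_mul, abs_of_nonneg (truncPow_nonneg _ _ _),
        abs_of_nonneg (Real.rpow_nonneg hx.le lam), mul_comm]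
      exact mul_le_mul_of_nonneg_right (truncPow_le_rpow hlam0 n hx) (abs_nonneg _)
    · filter_upwards [ae_restrict_mem measurableSet_Ioi] with x (hx : 0 < x)
      exact (truncPow_tendsto lam hx).const_mul _
  have hzero : (1 / 2) * (∫ x, ∫ y, G (x, y) ∂μ ∂μ) + ∫ x, S x * x ^ lam ∂μ = 0 := by
    refine tendsto_nhds_unique ((hdouble.const_mul (1 / 2)).add hsource)
      (tendsto_const_nhds.congr fun n => ?_)
    refine (hweak (truncPow lam n) (measurable_truncPow lam n) ⟨(n : ℝ) ^ lam, fun x => ?_⟩).symm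
    rw [abs_of_nonneg (truncPow_nonneg _ _ _)]
    exact truncPow_le_const hlam0 n x
  have hM : Mom lam S = ∫ x, S x * x ^ lam ∂μ := by
    simp only [Mom, mul_comm, hμ]
  have hneg : (∫ x, ∫ y, (x ^ lam + y ^ lam - (x + y) ^ lam) * K x y * φ x * φ y ∂μ ∂μ)
      = -∫ x, ∫ y, G (x, y) ∂μ ∂μ := by
    simp only [← integral_neg]
    refine integral_congr_ae (Eventually.of_forall fun x => integral_congr_ae
      (Eventually.of_forall fun y => ?_))
    simp only [G]
    ring
  rw [hM, hneg]
  linarith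
end
end

section
/- Let θ ∈ [0,1/2], m ∈ (0,1), and σ ∈ [0,(m+2θ)/2). If g is a measurable function on (1,∞) that is nonnegative a.e. and satisfies ∫₁^∞ x^σ g(x) dx < ∞, then (∫₁^∞ x^σ g(x) dx)² ≤ (κ(θ,m,σ)/2) ∫₁^∞∫₁^∞ (x^m + y^m − (x+y)^m) (x y)^θ g(x) g(y) dy dx, where κ(θ,m,σ) := (2^{1−m} π² / (3(1−m))) · 4^{(2−m)/(m+2θ−2σ)}. -/
open MeasureTheory Set Filter

/-!
The argument localizes to blocks of polynomial size. With `α = 2 / (m + 2θ - 2σ)` cut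
`(1, ∞)` into the blocks `J n = (n ^ α, (n + 1) ^ α]`, `n ≥ 1`, and let `A n` be the integral of
`x ^ σ * g x` over `J n`. Cauchy–Schwarz with the weights `1 / n` and `n`, together with
`∑ 1 / n ^ 2 = π ^ 2 / 6`, gives `(∑ A n) ^ 2 ≤ π ^ 2 / 6 * ∑ n ^ 2 * A n ^ 2`
(`sq_tsum_le_weighted`).

It remains to bound `∑ n ^ 2 * A n ^ 2` by the part of the double integral lying over the diagonal
blocks `J n × J n`. The kernel satisfies
`x ^ m + y ^ m - (x + y) ^ m ≥ 2 (1 - m) x y (x + y) ^ (m - 2)` (`kernel_lower_bound`), and on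
`J n × J n` both variables are comparable to `n ^ α`; the exponent `α` is exactly the one for which
the resulting power of `n` is `n ^ 2` (`block_lower_bound`).
-/

/-- A tangent-line type bound, obtained by inverting Bernoulli's inequality for the exponent
`1 - m`. -/
lemma mul_one_add_le_rpow {m u : ℝ} (hm0 : 0 < m) (hm1 : m < 1) (hu0 : 0 < u) (hu1 : u < 1) :
    u * (1 + (1 - m) * (1 - u)) ≤ u ^ m := by
  have hB := _root_.rpow_one_add_le_one_add_mul_self (s := u - 1) (by linarith) (p := 1 - m)
    (by linarith) (by linarith)
  rw [show 1 + (u - 1) = u by ring] at hB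
  have hsplit : u ^ m * u ^ (1 - m) = u := by
    rw [← Real.rpow_add hu0]; simp
  have hpos : 0 < u ^ m := Real.rpow_pos_of_pos hu0 _
  have hc : 0 ≤ (1 - m) * (1 - u) := mul_nonneg (by linarith) (by linarith)
  have h1 : u ≤ u ^ m * (1 - (1 - m) * (1 - u)) := by
    calc u = u ^ m * u ^ (1 - m) := hsplit.symm
      _ ≤ u ^ m * (1 + (1 - m) * (u - 1)) := by gcongr
      _ = _ := by ring
  nlinarith [mul_nonneg hpos.le (sq_nonneg ((1 - m) * (1 - u))),
    mul_le_mul_of_nonneg_right h1 (show 0 ≤ 1 + (1 - m) * (1 - u) by linarith)]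

lemma kernel_lower_bound {m x y : ℝ} (hm0 : 0 < m) (hm1 : m < 1) (hx : 0 < x) (hy : 0 < y) :
    2 * (1 - m) * (x * y) * (x + y) ^ (m - 2) ≤ x ^ m + y ^ m - (x + y) ^ m := by
  have hs : 0 < x + y := by linarith
  have hu := mul_one_add_le_rpow hm0 hm1 (u := x / (x + y)) (by positivity)
    ((div_lt_one hs).2 (by linarith))
  have hv := mul_one_add_le_rpow hm0 hm1 (u := y / (x + y)) (by positivity)
    ((div_lt_one hs).2 (by linarith))
  rw [Real.div_rpow hx.le hs.le] at hu
  rw [Real.div_rpow hy.le hs.le] at hv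
  have hS : 0 < (x + y) ^ m := Real.rpow_pos_of_pos hs _
  rw [le_div_iff₀ hS] at hu hv
  have h2 : (x + y) ^ (m - 2) = (x + y) ^ m / (x + y) ^ 2 := by
    rw [Real.rpow_sub hs]; norm_num
  have key : 2 * (1 - m) * (x * y) * (x + y) ^ (m - 2) + (x + y) ^ m
      = x / (x + y) * (1 + (1 - m) * (1 - x / (x + y))) * (x + y) ^ m
        + y / (x + y) * (1 + (1 - m) * (1 - y / (x + y))) * (x + y) ^ m := by
    rw [h2]
    generalize (x + y) ^ m = S
    field_simp
    ring
  linarith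

/-- On a diagonal block `(N ^ α, (N + 1) ^ α] ^ 2` with `α = 2 / (m + 2θ - 2σ)`, the weighted kernel
dominates `N ^ 2 * (x * y) ^ σ`. -/
lemma block_lower_bound {θ m σ N x y : ℝ} (hm0 : 0 < m) (hm1 : m < 1)
    (hσ : σ < (m + 2 * θ) / 2) (hN : 1 ≤ N)
    (hx : N ^ (2 / (m + 2 * θ - 2 * σ)) < x) (hx' : x ≤ (N + 1) ^ (2 / (m + 2 * θ - 2 * σ)))
    (hy : N ^ (2 / (m + 2 * θ - 2 * σ)) < y) (hy' : y ≤ (N + 1) ^ (2 / (m + 2 * θ - 2 * σ))) :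
    N ^ 2 * (x ^ σ * y ^ σ) ≤ ((2:ℝ) ^ (1 - m) / (1 - m)
          * (4:ℝ) ^ ((2 - m) / (m + 2 * θ - 2 * σ))) *
        ((x ^ m + y ^ m - (x + y) ^ m) * (x * y) ^ θ) := by
  have hd : 0 < m + 2 * θ - 2 * σ := by linarith
  set α := 2 / (m + 2 * θ - 2 * σ) with hα
  have hα0 : 0 < α := by positivity
  have hαd : α * (m + 2 * θ - 2 * σ) = 2 := by rw [hα]; field_simp
  have hN0 : 0 < N := by linarith
  have hNα : 0 < N ^ α := Real.rpow_pos_of_pos hN0 _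
  have hx0 : 0 < x := hNα.trans hx
  have hy0 : 0 < y := hNα.trans hy
  have h1m : 0 < 1 - m := by linarith
  have hP : 0 < x * y := mul_pos hx0 hy0
  have h4 : (4:ℝ) ^ ((2 - m) / (m + 2 * θ - 2 * σ)) = 2 ^ (α * (2 - m)) := by
    rw [show (4:ℝ) = 2 ^ (2:ℝ) by norm_num, ← Real.rpow_mul (by norm_num)]
    congr 1; rw [hα]; ring
  -- `x + y ≤ 2 (N + 1) ^ α ≤ 2 (2 N) ^ α`, raised to the negative power `m - 2`
  have hs : x + y ≤ 2 * (2 ^ α * N ^ α) := by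
    have : (N + 1) ^ α ≤ (2 * N) ^ α := Real.rpow_le_rpow (by linarith) (by linarith) hα0.le
    rw [Real.mul_rpow (by norm_num) hN0.le] at this
    linarith
  have hs2 : (2 * (2 ^ α * N ^ α)) ^ (m - 2) ≤ (x + y) ^ (m - 2) :=
    Real.rpow_le_rpow_of_nonpos (by linarith) hs (by linarith)
  have hs3 : (2 * (2 ^ α * N ^ α)) ^ (m - 2)
      = 2 ^ (m - 2) * (2 ^ (α * (m - 2)) * N ^ (α * (m - 2))) := by
    rw [Real.mul_rpow (by norm_num) (by positivity), Real.mul_rpow (by positivity) hNα.le,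
      ← Real.rpow_mul (by norm_num), ← Real.rpow_mul hN0.le]
  have hP2 : N ^ (α * (2 * (1 + θ - σ))) ≤ (x * y) ^ (1 + θ - σ) := by
    have : (N ^ α * N ^ α) ^ (1 + θ - σ) ≤ (x * y) ^ (1 + θ - σ) :=
      Real.rpow_le_rpow (by positivity) (by gcongr) (by linarith)
    rwa [← Real.rpow_add hN0, ← Real.rpow_mul hN0.le,
      show (α + α) * (1 + θ - σ) = α * (2 * (1 + θ - σ)) by ring] at this
  have hNpow : N ^ (α * (m - 2)) * N ^ (α * (2 * (1 + θ - σ))) = N ^ 2 := by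
    rw [← Real.rpow_add hN0, show α * (m - 2) + α * (2 * (1 + θ - σ)) = 2 by linear_combination hαd]
    norm_num
  have hPsplit : (x * y) * (x * y) ^ θ = (x * y) ^ (1 + θ - σ) * (x ^ σ * y ^ σ) := by
    rw [← Real.mul_rpow hx0.le hy0.le, ← Real.rpow_add hP, sub_add_cancel, Real.rpow_add hP,
      Real.rpow_one]
  have h2a : (2:ℝ) ^ (1 - m) * 2 * 2 ^ (m - 2) = 1 := by
    have : (2:ℝ) ^ (1 - m) * 2 ^ (1:ℝ) * 2 ^ (m - 2) = 1 := by
      rw [← Real.rpow_add (by norm_num), ← Real.rpow_add (by norm_num)]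
      ring_nf; simp
    simpa using this
  have h2b : (2:ℝ) ^ (α * (2 - m)) * 2 ^ (α * (m - 2)) = 1 := by
    rw [← Real.rpow_add (by norm_num)]; ring_nf; simp
  have hk := kernel_lower_bound hm0 hm1 hx0 hy0
  rw [h4]
  calc N ^ 2 * (x ^ σ * y ^ σ)
      = ((2:ℝ) ^ (1 - m) / (1 - m) * 2 ^ (α * (2 - m))) *
        ((2 * (1 - m) * (2 ^ (m - 2) * (2 ^ (α * (m - 2)) * N ^ (α * (m - 2))))) *
          (N ^ (α * (2 * (1 + θ - σ))) * (x ^ σ * y ^ σ))) := by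
        have : (1 - m) / (1 - m) = 1 := div_self h1m.ne'
        calc N ^ 2 * (x ^ σ * y ^ σ)
            = ((2:ℝ) ^ (1 - m) * 2 * 2 ^ (m - 2)) * ((2:ℝ) ^ (α * (2 - m)) * 2 ^ (α * (m - 2)))
              * ((1 - m) / (1 - m))
              * (N ^ (α * (m - 2)) * N ^ (α * (2 * (1 + θ - σ)))) * (x ^ σ * y ^ σ) := by
              rw [h2a, h2b, hNpow, this]; ring
          _ = _ := by ring
    _ ≤ ((2:ℝ) ^ (1 - m) / (1 - m) * 2 ^ (α * (2 - m))) *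
        ((2 * (1 - m) * (x + y) ^ (m - 2)) * ((x * y) ^ (1 + θ - σ) * (x ^ σ * y ^ σ))) := by
        rw [← hs3]; gcongr
    _ = ((2:ℝ) ^ (1 - m) / (1 - m) * 2 ^ (α * (2 - m))) *
        ((2 * (1 - m) * (x * y) * (x + y) ^ (m - 2)) * (x * y) ^ θ) := by
        rw [← hPsplit]; ring
    _ ≤ _ := by gcongr

/-- Cauchy–Schwarz against the weights `1 / (n + 1)`, combined with `∑ 1 / n ^ 2 = π ^ 2 / 6`. -/
lemma sq_tsum_le_weighted (A : ℕ → ENNReal) :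
    (∑' n, A n) ^ 2 ≤ ENNReal.ofReal (Real.pi ^ 2 / 6) *
      ∑' n : ℕ, ENNReal.ofReal (((n:ℝ) + 1) ^ 2) * A n ^ 2 := by
  have hz : HasSum (fun n : ℕ => 1 / ((n:ℝ) + 1) ^ 2) (Real.pi ^ 2 / 6) := by
    have := (hasSum_nat_add_iff' 1).2 hasSum_zeta_two
    simpa using this
  have hz' : ∑' n : ℕ, ENNReal.ofReal (1 / ((n:ℝ) + 1)) ^ (2:ℝ)
      = ENNReal.ofReal (Real.pi ^ 2 / 6) := by
    rw [← hz.tsum_eq, ENNReal.ofReal_tsum_of_nonneg (fun n => by positivity) hz.summable]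
    refine tsum_congr fun n => ?_
    rw [ENNReal.rpow_two, ← ENNReal.ofReal_pow (by positivity)]
    simp
  have h := ENNReal.lintegral_mul_le_Lp_mul_Lq (Measure.count : Measure ℕ)
    Real.HolderConjugate.two_two
    (f := fun n => ENNReal.ofReal (1 / ((n:ℝ) + 1)))
    (g := fun n => ENNReal.ofReal ((n:ℝ) + 1) * A n)
    (measurable_of_countable _).aemeasurable (measurable_of_countable _).aemeasurable
  simp only [lintegral_count, Pi.mul_apply, hz'] at h
  have hA : ∀ n : ℕ, ENNReal.ofReal (1 / ((n:ℝ) + 1)) * (ENNReal.ofReal ((n:ℝ) + 1) * A n)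
      = A n := fun n => by
    rw [← mul_assoc, ← ENNReal.ofReal_mul (by positivity), one_div_mul_cancel (by positivity)]
    simp
  have hB : ∀ n : ℕ, (ENNReal.ofReal ((n:ℝ) + 1) * A n) ^ (2:ℝ)
      = ENNReal.ofReal (((n:ℝ) + 1) ^ 2) * A n ^ 2 := fun n => by
    rw [ENNReal.rpow_two, mul_pow, ENNReal.ofReal_pow (by positivity)]
  simp only [hA, hB] at h
  calc (∑' n, A n) ^ 2 ≤ _ := pow_le_pow_left' h 2
    _ = _ := by
      rw [mul_pow, ← ENNReal.rpow_two, ← ENNReal.rpow_two, ← ENNReal.rpow_mul, ← ENNReal.rpow_mul]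
      norm_num

/-- The blocks `((n + 1) ^ α, (n + 2) ^ α]` exhaust `(1, ∞)` when `α > 0`; written with
`((n + 1 : ℕ) : ℝ) + 1` on the right to match consecutive terms of a sequence. -/
lemma iUnion_blocks {α : ℝ} (hα : 0 < α) :
    (⋃ n : ℕ, Ioc (((n:ℝ) + 1) ^ α) ((((n + 1 : ℕ) : ℝ) + 1) ^ α)) = Ioi 1 := by
  have h := iUnion_Ioc_map_succ_eq_Ioi (α := ℕ) (f := fun n : ℕ => ((n:ℝ) + 1) ^ α)
    (fun n => Real.rpow_le_rpow (by positivity) (by simp) hα.le) ?_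
  · simpa using h
  · have ht : Tendsto (fun n : ℕ => ((n:ℝ) + 1) ^ α) atTop atTop :=
      (tendsto_rpow_atTop hα).comp
        (tendsto_atTop_add_const_right _ _ tendsto_natCast_atTop_atTop)
    exact not_bddAbove_of_tendsto_atTop ht

lemma disjoint_blocks {α : ℝ} (hα : 0 < α) :
    Pairwise (Function.onFun Disjoint
      fun n : ℕ => Ioc (((n:ℝ) + 1) ^ α) ((((n + 1 : ℕ) : ℝ) + 1) ^ α)) := by
  have hmono : Monotone (fun n : ℕ => ((n:ℝ) + 1) ^ α) := fun a b hab =>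
    Real.rpow_le_rpow (by positivity) (by gcongr) hα.le
  exact hmono.pairwise_disjoint_on_Ioc_succ

theorem stmt8 (θ m σ : ℝ) (hθ0 : 0 ≤ θ) (hθ : θ ≤ 1 / 2)
    (hm0 : 0 < m) (hm1 : m < 1) (hσ0 : 0 ≤ σ) (hσ : σ < (m + 2 * θ) / 2)
    (g : ℝ → ℝ) (hg : Measurable g)
    (hgpos : ∀ᵐ x ∂(volume.restrict (Set.Ioi (1:ℝ))), 0 ≤ g x)
    (hgint : MeasureTheory.IntegrableOn (fun x => x ^ σ * g x) (Set.Ioi 1)) :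
    ENNReal.ofReal ((∫ x in Set.Ioi (1:ℝ), x ^ σ * g x) ^ 2) ≤
      ENNReal.ofReal (((2:ℝ) ^ (1 - m) * Real.pi ^ 2 / (3 * (1 - m))
          * (4:ℝ) ^ ((2 - m) / (m + 2 * θ - 2 * σ))) / 2) *
        ∫⁻ x in Set.Ioi (1:ℝ), ∫⁻ y in Set.Ioi (1:ℝ),
          ENNReal.ofReal ((x ^ m + y ^ m - (x + y) ^ m) * (x * y) ^ θ * g x * g y) := by
  have hd : 0 < m + 2 * θ - 2 * σ := by linarith
  have h1m : 0 < 1 - m := by linarith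
  set C : ℝ := (2:ℝ) ^ (1 - m) / (1 - m) * (4:ℝ) ^ ((2 - m) / (m + 2 * θ - 2 * σ)) with hC
  have hC0 : 0 ≤ C := by positivity
  set α := 2 / (m + 2 * θ - 2 * σ) with hα
  have hα0 : 0 < α := by positivity
  set J : ℕ → Set ℝ := fun n => Ioc (((n:ℝ) + 1) ^ α) ((((n + 1 : ℕ) : ℝ) + 1) ^ α) with hJ
  have hJU : (⋃ n, J n) = Ioi 1 := iUnion_blocks hα0
  have hJd : Pairwise (Function.onFun Disjoint J) := disjoint_blocks hα0
  have hJm : ∀ n, MeasurableSet (J n) := fun n => measurableSet_Ioc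
  have hJsub : ∀ n, J n ⊆ Ioi 1 := fun n => hJU ▸ subset_iUnion J n
  set G : ℝ → ENNReal := fun x => ENNReal.ofReal (x ^ σ * g x) with hG
  have hGm : Measurable G := by fun_prop
  have hnn : 0 ≤ᵐ[volume.restrict (Ioi (1:ℝ))] fun x => x ^ σ * g x := by
    filter_upwards [hgpos, ae_restrict_mem measurableSet_Ioi] with x hx hx1
    exact mul_nonneg (Real.rpow_nonneg (zero_le_one.trans (le_of_lt hx1)) _) hx
  have hconst : ENNReal.ofReal (((2:ℝ) ^ (1 - m) * Real.pi ^ 2 / (3 * (1 - m))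
      * (4:ℝ) ^ ((2 - m) / (m + 2 * θ - 2 * σ))) / 2)
      = ENNReal.ofReal (Real.pi ^ 2 / 6) * ENNReal.ofReal C := by
    rw [← ENNReal.ofReal_mul (by positivity), hC]
    congr 1
    field_simp
    ring
  rw [ENNReal.ofReal_pow (integral_nonneg_of_ae hnn),
    ofReal_integral_eq_lintegral_ofReal hgint hnn, hconst, mul_assoc]
  have hsplit : ∫⁻ x in Ioi (1:ℝ), ENNReal.ofReal (x ^ σ * g x) = ∑' n, ∫⁻ x in J n, G x := by
    rw [← hJU, lintegral_iUnion hJm hJd]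
  rw [hsplit]
  refine (sq_tsum_le_weighted _).trans ?_
  gcongr
  rw [← lintegral_const_mul' _ _ ENNReal.ofReal_ne_top, ← hJU, lintegral_iUnion hJm hJd, hJU]
  refine ENNReal.tsum_le_tsum fun n => ?_
  have hgJ : ∀ᵐ x ∂(volume.restrict (J n)), 0 ≤ g x := ae_restrict_of_ae_restrict_of_subset
    (hJsub n) hgpos
  have hprod : ENNReal.ofReal (((n:ℝ) + 1) ^ 2) * (∫⁻ x in J n, G x) ^ 2
      = ∫⁻ x in J n, ∫⁻ y in J n, ENNReal.ofReal (((n:ℝ) + 1) ^ 2) * G x * G y := by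
    simp_rw [lintegral_const_mul _ hGm, mul_assoc]
    rw [lintegral_const_mul _ (hGm.mul_const _), lintegral_mul_const _ hGm,
      sq (∫⁻ x in J n, G x)]
  rw [hprod]
  refine lintegral_mono_ae ?_
  filter_upwards [hgJ, ae_restrict_mem (hJm n)] with x hgx hxJ
  rw [← lintegral_const_mul' _ _ ENNReal.ofReal_ne_top]
  refine le_trans ?_ (lintegral_mono_set (hJsub n))
  refine lintegral_mono_ae ?_
  filter_upwards [hgJ, ae_restrict_mem (hJm n)] with y hgy hyJ
  have hx1 : (0:ℝ) < x := zero_lt_one.trans (hJsub n hxJ)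
  have hy1 : (0:ℝ) < y := zero_lt_one.trans (hJsub n hyJ)
  have hcast : (((n + 1 : ℕ) : ℝ) + 1) = ((n:ℝ) + 1) + 1 := by push_cast; ring
  have hb := block_lower_bound (N := (n:ℝ) + 1) hm0 hm1 hσ (by simp)
    hxJ.1 (hcast ▸ hxJ.2) hyJ.1 (hcast ▸ hyJ.2)
  rw [hG]
  dsimp only
  rw [← ENNReal.ofReal_mul (by positivity), ← ENNReal.ofReal_mul (by positivity),
    ← ENNReal.ofReal_mul hC0]
  refine ENNReal.ofReal_le_ofReal ?_
  calc ((n:ℝ) + 1) ^ 2 * (x ^ σ * g x) * (y ^ σ * g y)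
      = ((n:ℝ) + 1) ^ 2 * (x ^ σ * y ^ σ) * (g x * g y) := by ring
    _ ≤ C * ((x ^ m + y ^ m - (x + y) ^ m) * (x * y) ^ θ) * (g x * g y) :=
        mul_le_mul_of_nonneg_right hb (mul_nonneg hgx hgy)
    _ = _ := by ring
end

section
/- Let λ ∈ [0,1) and A > 0. For all x, y ∈ (0,A) with x + y > A, one has (x + y − A)(x^λ + y^λ) ≤ 2 (x y)^{(1+λ)/2}. -/
/-!
Since `x, y < A`, the factor `x + y - A` is less than `min x y`. By symmetry let `x ≤ y`; it then
suffices to bound `x * (x ^ lam + y ^ lam)`, which is `mul_rpow_add_rpow_le`.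
-/

/-- Each of the two products on the left is at most `(x * y) ^ ((1 + lam) / 2)`: move the power of
`x` exceeding `(1 + lam) / 2` onto the larger base `y`. -/
lemma mul_rpow_add_rpow_le {lam x y : ℝ} (h0 : 0 ≤ lam) (h1 : lam < 1) (hx : 0 < x)
    (hxy : x ≤ y) :
    x * (x ^ lam + y ^ lam) ≤ 2 * (x * y) ^ ((1 + lam) / 2) := by
  have hy : 0 < y := hx.trans_le hxy
  rw [Real.mul_rpow hx.le hy.le]
  have e1 : x * x ^ lam = x ^ ((1 + lam) / 2) * x ^ ((1 + lam) / 2) := by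
    rw [← Real.rpow_add hx, ← Real.rpow_one_add' hx.le (by linarith)]
    ring_nf
  have e2 : x = x ^ ((1 + lam) / 2) * x ^ ((1 - lam) / 2) := by
    rw [← Real.rpow_add hx]
    ring_nf
    simp
  have e3 : y ^ ((1 + lam) / 2) = y ^ ((1 - lam) / 2) * y ^ lam := by
    rw [← Real.rpow_add hy]
    ring_nf
  have i1 : x * x ^ lam ≤ x ^ ((1 + lam) / 2) * y ^ ((1 + lam) / 2) := by
    rw [e1]
    gcongr
  have i2 : x * y ^ lam ≤ x ^ ((1 + lam) / 2) * y ^ ((1 + lam) / 2) := by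
    calc x * y ^ lam = x ^ ((1 + lam) / 2) * (x ^ ((1 - lam) / 2) * y ^ lam) := by
          rw [← mul_assoc, ← e2]
      _ ≤ x ^ ((1 + lam) / 2) * (y ^ ((1 - lam) / 2) * y ^ lam) := by
          have : 0 ≤ (1 - lam) / 2 := by linarith
          gcongr
      _ = _ := by rw [← e3]
  linarith

theorem stmt16 (lam A : ℝ) (hlam0 : 0 ≤ lam) (hlam1 : lam < 1) (hA : 0 < A)
    (x y : ℝ) (hx : 0 < x) (hxA : x < A) (hy : 0 < y) (hyA : y < A)
    (hxy : A < x + y) :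
    (x + y - A) * (x ^ lam + y ^ lam) ≤ 2 * (x * y) ^ ((1 + lam) / 2) := by
  have hs : 0 ≤ x ^ lam + y ^ lam := by positivity
  rcases le_total x y with h | h
  · exact (mul_le_mul_of_nonneg_right (by linarith) hs).trans
      (mul_rpow_add_rpow_le hlam0 hlam1 hx h)
  · rw [mul_comm x y, add_comm (x ^ lam)]
    exact (mul_le_mul_of_nonneg_right (by linarith) (by linarith)).trans
      (mul_rpow_add_rpow_le hlam0 hlam1 hy h)
end

section
/- Let λ ∈ [0,1]. For all x, y > 0, one has x^λ ((x+y)^{1+λ} − x^{1+λ} − y^{1+λ}) ≤ 4 x^{2λ} y. -/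
/-!
Factor `(x + y) ^ (1 + lam) = (x + y) * (x + y) ^ lam` and treat the two summands separately.
Since `(1 + y / x) ^ lam ≤ 1 + y / x`, one has `x * (x + y) ^ lam ≤ x ^ lam * (x + y)`; and by
subadditivity of `t ↦ t ^ lam`, one has `y * (x + y) ^ lam ≤ y * (x ^ lam + y ^ lam)`. Adding,
`(x + y) ^ (1 + lam) - x ^ (1 + lam) - y ^ (1 + lam) ≤ 2 * x ^ lam * y`, so the claim holds
even with constant `2`.
-/

theorem stmt17 (lam : ℝ) (hlam0 : 0 ≤ lam) (hlam1 : lam ≤ 1)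
    (x y : ℝ) (hx : 0 < x) (hy : 0 < y) :
    x ^ lam * ((x + y) ^ (1 + lam) - x ^ (1 + lam) - y ^ (1 + lam))
      ≤ 4 * x ^ (2 * lam) * y := by
  have hA : 0 < x ^ lam := Real.rpow_pos_of_pos hx _
  have hsub : (x + y) ^ lam ≤ x ^ lam + y ^ lam :=
    Real.rpow_add_le_add_rpow hx.le hy.le hlam0 hlam1
  have hlin : x * (x + y) ^ lam ≤ x ^ lam * (x + y) := by
    have h1 : (1 : ℝ) ≤ 1 + y / x := by linarith [div_pos hy hx]
    have h2 : (1 + y / x) ^ lam ≤ 1 + y / x := by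
      simpa using Real.rpow_le_rpow_of_exponent_le h1 hlam1
    have h3 : x + y = x * (1 + y / x) := by field_simp
    rw [h3, Real.mul_rpow hx.le (by linarith)]
    calc x * (x ^ lam * (1 + y / x) ^ lam) = x * x ^ lam * (1 + y / x) ^ lam := by ring
      _ ≤ x * x ^ lam * (1 + y / x) := by gcongr
      _ = x ^ lam * (x * (1 + y / x)) := by ring
  have hsub' := mul_le_mul_of_nonneg_left hsub hy.le
  have hpow : x ^ (2 * lam) = x ^ lam * x ^ lam := by rw [two_mul, Real.rpow_add hx]
  rw [Real.rpow_add (add_pos hx hy), Real.rpow_add hx, Real.rpow_add hy, hpow,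
    Real.rpow_one, Real.rpow_one, Real.rpow_one]
  have hAy : 0 < x ^ lam * y := mul_pos hA hy
  calc x ^ lam * ((x + y) * (x + y) ^ lam - x * x ^ lam - y * y ^ lam)
      ≤ x ^ lam * (4 * (x ^ lam * y)) := by
        apply mul_le_mul_of_nonneg_left _ hA.le
        linarith
    _ = 4 * (x ^ lam * x ^ lam) * y := by ring
end
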